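/- Let n ≥ k, d ≥ k, and let R ∈ ℝ^{n×d} be a random matrix whose entries are independent Gaussian random variables with mean 0 and variance 1/d. For every t ≥ 0, with probability at least 1 − exp(−t²/2), there exists an orthogonal matrix Q ∈ ℝ^{d×d} such that ‖Ψ − Φ I_{k×d} Q‖_F ≤ √(k/d)·(√k + t), where Ψ = H R. -/

import Mathlib

open Matrix MeasureTheory ProbabilityTheory Finset

noncomputable section

/-- The `a × b` matrix with ones on the main diagonal and zeros elsewhere. -/
def rectId (a b : ℕ) : Matrix (Fin a) (Fin b) ℝ :=
  Matrix.of fun i j => if (i : ℕ) = (j : ℕ) then 1 else 0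

/-- Frobenius norm of a real matrix. -/
def frob {a b : ℕ} (M : Matrix (Fin a) (Fin b) ℝ) : ℝ :=
  Real.sqrt (∑ i, ∑ j, (M i j) ^ 2)

/-- Euclidean norm of a vector. -/
def enorm2 {a : ℕ} (v : Fin a → ℝ) : ℝ :=
  Real.sqrt (∑ i, (v i) ^ 2)

/-- `X` is the cluster-indicator matrix of the partition of `Fin n` into the
(nonempty) fibers of the surjective map `f : Fin n → Fin k`. -/
def IsIndicatorOf {n k : ℕ} (f : Fin n → Fin k) (X : Matrix (Fin n) (Fin k) ℝ) : Prop :=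
  Function.Surjective f ∧
    ∀ i j, X i j =
      if f i = j then 1 / Real.sqrt ((Finset.univ.filter fun i' => f i' = j).card) else 0

/-- `X` is a cluster-indicator matrix of a partition into `k` nonempty clusters. -/
def IsIndicator {n k : ℕ} (X : Matrix (Fin n) (Fin k) ℝ) : Prop :=
  ∃ f : Fin n → Fin k, IsIndicatorOf f X

/-- The k-means cost of the assignment `X` on the feature matrix `M`. -/
def kmeansCost {n k m : ℕ} (M : Matrix (Fin n) (Fin m) ℝ)
    (X : Matrix (Fin n) (Fin k) ℝ) : ℝ :=
  frob (M - X * Xᵀ * M)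

/-- `X` minimizes the k-means cost on features `M` over all indicator matrices. -/
def IsOptAssign {n k m : ℕ} (M : Matrix (Fin n) (Fin m) ℝ)
    (X : Matrix (Fin n) (Fin k) ℝ) : Prop :=
  IsIndicator X ∧
    ∀ Y : Matrix (Fin n) (Fin k) ℝ, IsIndicator Y → kmeansCost M X ≤ kmeansCost M Y

/-- Law of an `n × d` random matrix with i.i.d. Gaussian entries of
mean `0` and variance `1 / d`. -/
def gaussMeasure (n d : ℕ) : Measure (Fin n → Fin d → ℝ) :=
  Measure.pi fun _ => Measure.pi fun _ => gaussianReal 0 (d : NNReal)⁻¹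

/-!
Since `Φᵀ * Φ = 1`, the quantity to bound is `‖Φᵀ * R - I * Q‖_F`, and the matrix `√d • Φᵀ * R` has
independent standard Gaussian entries. As the matrices `I * Q` are those with orthonormal rows,
everything reduces to the distance of a standard Gaussian `k × d` matrix `G` from `√d` times the set
of such matrices.

This distance has mean at most `k`. Comparing `G` with the Gram–Schmidt orthonormalisation of its
rows gives `dist² ≤ ‖G‖² - 2 √d ∑ ‖gᵢ‖ + d k`, where, for `0 ≤ i < k`, the Gram–Schmidt vector `gᵢ`
is the projection of row `i` to a space of dimension at least `d - i` that does not depend on that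
row, so that `‖gᵢ‖` has mean at least `(d - i - 1/2) / √d`. Summing, the mean of `dist²` is at most
`k²`.

The distance is a 1-Lipschitz function of `G`, hence it exceeds its mean by `u` with probability at
most `exp (-u² / 2)`. This concentration inequality follows from the infimum-convolution inequality
for the Gaussian measure, which holds on the line by the Prékopa–Leindler inequality and is stable
under products. The choice `u = √k * t` concludes.
-/

open Filter Topology
open scoped Pointwise RealInnerProductSpace ENNReal NNReal

section PrekopaLeindler

/-- Only the point `sSup A + sInf B` is common to the translates `A + sInf B` and `sSup A + B`. -/
lemma volume_add_le_volume_add_of_isCompact {A B : Set ℝ} (hA : IsCompact A) (hB : IsCompact B)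
    (hA₀ : A.Nonempty) (hB₀ : B.Nonempty) : volume A + volume B ≤ volume (A + B) := by
  have hdisj : AEDisjoint volume (A + {sInf B}) ({sSup A} + B) := by
    refine measure_mono_null (t := {sSup A + sInf B}) ?_ (by simp)
    rintro _ ⟨⟨x, hx, _, rfl, rfl⟩, ⟨_, rfl, y, hy, hxy⟩⟩
    have hx' := le_csSup hA.bddAbove hx
    have hy' := csInf_le hB.bddBelow hy
    simp only [Set.mem_singleton_iff] at hxy ⊢
    linarith
  have hmeas : NullMeasurableSet ({sSup A} + B) volume :=
    (isCompact_singleton.add hB).measurableSet.nullMeasurableSet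
  calc volume A + volume B = volume (A + {sInf B}) + volume ({sSup A} + B) := by
        simp [Set.add_singleton, Set.singleton_add]
    _ = volume ((A + {sInf B}) ∪ ({sSup A} + B)) := (measure_union₀ hmeas hdisj).symm
    _ ≤ volume (A + B) := measure_mono <| Set.union_subset
        (Set.add_subset_add_left <| Set.singleton_subset_iff.2 <| hB.sInf_mem hB₀)
        (Set.add_subset_add_right <| Set.singleton_subset_iff.2 <| hA.sSup_mem hA₀)

lemma volume_add_le_volume_add {A B : Set ℝ} (hA : MeasurableSet A) (hB : MeasurableSet B)
    (hA₀ : A.Nonempty) (hB₀ : B.Nonempty) : volume A + volume B ≤ volume (A + B) := by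
  obtain ⟨a, ha⟩ := hA₀
  obtain ⟨b, hb⟩ := hB₀
  rw [hA.measure_eq_iSup_isCompact, hB.measure_eq_iSup_isCompact]
  simp only [iSup_and']
  refine ENNReal.biSup_add_biSup_le' ⟨∅, by simp⟩ ⟨∅, by simp⟩ ?_
  rintro K ⟨hKA, hK⟩ L ⟨hLB, hL⟩
  calc volume K + volume L ≤ volume (insert a K) + volume (insert b L) := by
        gcongr <;> exact Set.subset_insert _ _
    _ ≤ volume (insert a K + insert b L) :=
        volume_add_le_volume_add_of_isCompact (hK.insert a) (hL.insert b)
          (Set.insert_nonempty _ _) (Set.insert_nonempty _ _)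
    _ ≤ volume (A + B) := by
        gcongr
        exacts [Set.insert_subset ha hKA, Set.insert_subset hb hLB]

variable {t s : ℝ} {f g h : ℝ → ℝ}

lemma mul_volume_add_mul_volume_le (ht : 0 < t) (hs : 0 < s) {A B : Set ℝ} (hA : MeasurableSet A)
    (hB : MeasurableSet B) (hA₀ : A.Nonempty) (hB₀ : B.Nonempty) :
    ENNReal.ofReal t * volume A + ENNReal.ofReal s * volume B ≤ volume (t • A + s • B) := by
  simpa [Measure.addHaar_smul, abs_of_pos ht, abs_of_pos hs] using
    volume_add_le_volume_add (hA.const_smul₀ t) (hB.const_smul₀ s) (hA₀.smul_set (a := t))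
      (hB₀.smul_set (a := s))

lemma mul_lintegral_add_mul_lintegral_le_of_isLUB (hf : Measurable f) (hg : Measurable g)
    (hh : Measurable h) (hf₀ : 0 ≤ f) (hg₀ : 0 ≤ g) (hh₀ : 0 ≤ h) (hf₁ : IsLUB (Set.range f) 1)
    (hg₁ : IsLUB (Set.range g) 1) (ht : 0 < t) (hs : 0 < s) (hts : t + s = 1)
    (hfgh : ∀ x y, f x ^ t * g y ^ s ≤ h (t * x + s * y)) :
    ENNReal.ofReal t * (∫⁻ x, ENNReal.ofReal (f x)) + ENNReal.ofReal s *
      (∫⁻ x, ENNReal.ofReal (g x)) ≤ ∫⁻ x, ENNReal.ofReal (h x) := by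
  have hmeas (φ : ℝ → ℝ) : Measurable fun r : ℝ => volume {x : ℝ | r < φ x} :=
    Antitone.measurable fun a b hab => measure_mono fun x hx => lt_of_le_of_lt hab hx
  have hempty {φ : ℝ → ℝ} (hφ : IsLUB (Set.range φ) 1) {r : ℝ} (hr : 1 ≤ r) :
      {x | r < φ x} = ∅ :=
    Set.eq_empty_of_forall_notMem fun x hx => (hφ.1 ⟨x, rfl⟩).not_gt (hr.trans_lt hx)
  have hnonempty {φ : ℝ → ℝ} (hφ : IsLUB (Set.range φ) 1) {r : ℝ} (hr : r < 1) :
      {x | r < φ x}.Nonempty := by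
    obtain ⟨_, ⟨x, rfl⟩, hx⟩ := (lt_isLUB_iff hφ).1 hr
    exact ⟨x, hx⟩
  rw [lintegral_eq_lintegral_meas_lt volume (ae_of_all _ hf₀) hf.aemeasurable,
    lintegral_eq_lintegral_meas_lt volume (ae_of_all _ hg₀) hg.aemeasurable,
    lintegral_eq_lintegral_meas_lt volume (ae_of_all _ hh₀) hh.aemeasurable,
    ← lintegral_const_mul _ (hmeas f), ← lintegral_const_mul _ (hmeas g),
    ← lintegral_add_left ((hmeas f).const_mul _)]
  refine setLIntegral_mono' measurableSet_Ioi fun r (hr : 0 < r) => ?_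
  rcases le_or_gt 1 r with hr₁ | hr₁
  · simp [hempty hf₁ hr₁, hempty hg₁ hr₁]
  refine (mul_volume_add_mul_volume_le ht hs (measurableSet_lt measurable_const hf)
    (measurableSet_lt measurable_const hg) (hnonempty hf₁ hr₁) (hnonempty hg₁ hr₁)).trans
    (measure_mono ?_)
  rintro _ ⟨_, ⟨x, hx : r < f x, rfl⟩, _, ⟨y, hy : r < g y, rfl⟩, rfl⟩
  calc r = r ^ t * r ^ s := by rw [← Real.rpow_add hr, hts, Real.rpow_one]
    _ < f x ^ t * g y ^ s := mul_lt_mul'' (Real.rpow_lt_rpow hr.le hx ht)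
        (Real.rpow_lt_rpow hr.le hy hs) (by positivity) (by positivity)
    _ ≤ h (t * x + s * y) := hfgh x y

lemma ennreal_geom_mean_le_arith_mean2_weighted (ht : 0 < t) (hs : 0 < s) (hts : t + s = 1)
    (a b : ℝ≥0∞) : a ^ t * b ^ s ≤ ENNReal.ofReal t * a + ENNReal.ofReal s * b := by
  have hconj : Real.HolderConjugate t⁻¹ s⁻¹ := Real.holderConjugate_iff.2 ⟨?_, ?_⟩
  · simpa [← ENNReal.rpow_mul, ht.ne', hs.ne', ENNReal.ofReal_inv_of_pos, ht, hs, div_eq_mul_inv,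
      mul_comm] using ENNReal.young_inequality (a ^ t) (b ^ s) hconj
  · exact (one_lt_inv₀ ht).2 (by linarith)
  · simpa using hts

lemma exists_isLUB_range_div (hf : BddAbove (Set.range f)) {x₀ : ℝ} (hx₀ : 0 < f x₀) :
    ∃ a, 0 < a ∧ IsLUB (Set.range fun x => f x / a) 1 := by
  have hlub := isLUB_ciSup hf
  have ha : 0 < ⨆ x, f x := hx₀.trans_le (hlub.1 ⟨x₀, rfl⟩)
  refine ⟨_, ha, ?_, fun b hb => ?_⟩
  · rintro _ ⟨x, rfl⟩
    exact (div_le_one ha).2 (hlub.1 ⟨x, rfl⟩)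
  · refine (one_le_div₀ ha).2 ?_ |>.trans_eq (mul_div_cancel_right₀ b ha.ne')
    refine hlub.2 ?_
    rintro _ ⟨x, rfl⟩
    exact (div_le_iff₀ ha).1 (hb ⟨x, rfl⟩)

theorem prekopa_leindler (hf : Measurable f) (hg : Measurable g) (hh : Measurable h)
    (hf₀ : 0 ≤ f) (hg₀ : 0 ≤ g) (hh₀ : 0 ≤ h) (hfb : BddAbove (Set.range f))
    (hgb : BddAbove (Set.range g)) (ht : 0 < t) (hs : 0 < s) (hts : t + s = 1)
    (hfgh : ∀ x y, f x ^ t * g y ^ s ≤ h (t * x + s * y)) :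
    (∫⁻ x, ENNReal.ofReal (f x)) ^ t * (∫⁻ x, ENNReal.ofReal (g x)) ^ s ≤
      ∫⁻ x, ENNReal.ofReal (h x) := by
  rcases eq_or_lt_of_le hf₀ with rfl | hf_pos
  · simp [ht]
  rcases eq_or_lt_of_le hg₀ with rfl | hg_pos
  · simp [hs]
  obtain ⟨-, x₀, hx₀⟩ := Pi.lt_def.1 hf_pos
  obtain ⟨-, y₀, hy₀⟩ := Pi.lt_def.1 hg_pos
  obtain ⟨a, ha, hfa⟩ := exists_isLUB_range_div hfb hx₀
  obtain ⟨b, hb, hgb⟩ := exists_isLUB_range_div hgb hy₀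
  have hab : 0 < a ^ t * b ^ s := by positivity
  have hnormalized := mul_lintegral_add_mul_lintegral_le_of_isLUB (hf.div_const a)
    (hg.div_const b) (hh.div_const (a ^ t * b ^ s)) (fun x => div_nonneg (hf₀ x) ha.le)
    (fun x => div_nonneg (hg₀ x) hb.le) (fun x => div_nonneg (hh₀ x) hab.le) hfa hgb ht hs hts
    (fun x y => by
      rw [Real.div_rpow (hf₀ x) ha.le, Real.div_rpow (hg₀ y) hb.le, div_mul_div_comm]
      exact div_le_div_of_nonneg_right (hfgh x y) hab.le)
  have hdiv (φ : ℝ → ℝ) {c : ℝ} (hc : 0 < c) : ∫⁻ x, ENNReal.ofReal (φ x / c) =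
      (∫⁻ x, ENNReal.ofReal (φ x)) / ENNReal.ofReal c := by
    simp_rw [ENNReal.ofReal_div_of_pos hc, div_eq_mul_inv]
    rw [lintegral_mul_const' _ _ (by simpa using hc)]
  have hmean := (ennreal_geom_mean_le_arith_mean2_weighted ht hs hts _ _).trans hnormalized
  simp only [hdiv _ ha, hdiv _ hb, hdiv _ hab, ENNReal.div_rpow_of_nonneg _ _ ht.le,
    ENNReal.div_rpow_of_nonneg _ _ hs.le, ENNReal.ofReal_rpow_of_pos ha,
    ENNReal.ofReal_rpow_of_pos hb, ENNReal.ofReal_mul (Real.rpow_nonneg ha.le t)] at hmean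
  have hat : ENNReal.ofReal (a ^ t) ≠ 0 := by simpa using Real.rpow_pos_of_pos ha t
  have hbs : ENNReal.ofReal (b ^ s) ≠ 0 := by simpa using Real.rpow_pos_of_pos hb s
  rw [← ENNReal.mul_div_mul_comm (Or.inl hat) (Or.inl ENNReal.ofReal_ne_top)] at hmean
  exact (ENNReal.mul_le_mul_iff_left (ENNReal.inv_ne_zero.2 (by finiteness))
    (ENNReal.inv_ne_top.2 (mul_ne_zero hat hbs))).1 hmean

end PrekopaLeindler

section InfConvolution

open Real (exp log)

/-- The infimum-convolution inequality (Maurey's property `τ`) for the measure `μ` and the cost `c`,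
in the form `∫ exp h ≤ exp (∫ f)`. It is a dual transport inequality, stable under products. The
infimum of `y ↦ f y + c x y` is replaced by an arbitrary measurable minorant `h`, since the
infimum itself need not be measurable. -/
def InfConvolutionInequality {Ω : Type*} [MeasurableSpace Ω] (μ : Measure Ω) (c : Ω → Ω → ℝ) :
    Prop :=
  ∀ f h : Ω → ℝ, Measurable f → Measurable h → (∃ M, ∀ x, |f x| ≤ M) → (∃ M, ∀ x, |h x| ≤ M) →
    (∀ x y, h x ≤ f y + c x y) → ∫ x, exp (h x) ∂μ ≤ exp (∫ x, f x ∂μ)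

lemma integrable_exp_of_abs_le {Ω : Type*} [MeasurableSpace Ω] {μ : Measure Ω} [IsFiniteMeasure μ]
    {f : Ω → ℝ} (hf : Measurable f) (hf_bdd : ∃ M, ∀ x, |f x| ≤ M) :
    Integrable (fun x => exp (f x)) μ := by
  obtain ⟨M, hM⟩ := hf_bdd
  refine Integrable.of_bound (by fun_prop) (exp M) (ae_of_all _ fun x => ?_)
  rw [Real.norm_of_nonneg (Real.exp_nonneg _)]
  exact Real.exp_le_exp.2 ((le_abs_self _).trans (hM x))

lemma exists_abs_const_mul_le {Ω : Type*} {f : Ω → ℝ} (hf : ∃ M, ∀ x, |f x| ≤ M) (r : ℝ) :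
    ∃ M, ∀ x, |r * f x| ≤ M := by
  obtain ⟨M, hM⟩ := hf
  refine ⟨|r| * M, fun x => ?_⟩
  rw [abs_mul]
  exact mul_le_mul_of_nonneg_left (hM x) (abs_nonneg r)

section OneDimension

variable {m : ℝ} {v : ℝ≥0} {t s : ℝ}

lemma gaussianPDFReal_le (m : ℝ) (v : ℝ≥0) (x : ℝ) :
    gaussianPDFReal m v x ≤ (√(2 * Real.pi * v))⁻¹ := by
  refine mul_le_of_le_one_right (by positivity) (Real.exp_le_one_iff.2 ?_)
  exact div_nonpos_of_nonpos_of_nonneg (by nlinarith [sq_nonneg (x - m)]) (by positivity)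

lemma gaussianPDFReal_rpow_mul_rpow_mul_exp (hv : v ≠ 0) (hts : t + s = 1) (x y : ℝ) :
    gaussianPDFReal m v x ^ t * gaussianPDFReal m v y ^ s *
        exp (t * s * ((x - y) ^ 2 / (2 * v))) = gaussianPDFReal m v (t * x + s * y) := by
  have : (0 : ℝ) < v := by positivity
  have hc : 0 < (√(2 * Real.pi * v))⁻¹ := by positivity
  obtain rfl : s = 1 - t := by linarith
  simp only [gaussianPDFReal, Real.mul_rpow hc.le (Real.exp_nonneg _), ← Real.exp_mul]
  calc _ = (((√(2 * Real.pi * v))⁻¹) ^ t * ((√(2 * Real.pi * v))⁻¹) ^ (1 - t)) *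
        (exp (-(x - m) ^ 2 / (2 * v) * t) * exp (-(y - m) ^ 2 / (2 * v) * (1 - t)) *
          exp (t * (1 - t) * ((x - y) ^ 2 / (2 * v)))) := by ring
    _ = _ := by
      rw [← Real.rpow_add hc, hts, Real.rpow_one, ← Real.exp_add, ← Real.exp_add]
      congr 2
      field_simp
      ring

lemma ofReal_integral_gaussianReal_eq (hv : v ≠ 0) {f : ℝ → ℝ} (hf : Measurable f)
    (hf₀ : ∀ x, 0 ≤ f x) (hf_int : Integrable f (gaussianReal m v)) :
    ENNReal.ofReal (∫ x, f x ∂gaussianReal m v) =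
      ∫⁻ x, ENNReal.ofReal (f x * gaussianPDFReal m v x) := by
  rw [ofReal_integral_eq_lintegral_ofReal hf_int (ae_of_all _ hf₀),
    gaussianReal_of_var_ne_zero _ hv,
    lintegral_withDensity_eq_lintegral_mul _ (measurable_gaussianPDF m v) hf.ennreal_ofReal]
  refine lintegral_congr fun x => ?_
  rw [mul_comm, ENNReal.ofReal_mul (hf₀ x)]
  rfl

lemma bddAbove_range_exp_mul_gaussianPDFReal {f : ℝ → ℝ} (hf : ∃ M, ∀ x, |f x| ≤ M) :
    BddAbove (Set.range fun x => exp (f x) * gaussianPDFReal m v x) := by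
  obtain ⟨M, hM⟩ := hf
  refine ⟨exp M * (√(2 * Real.pi * v))⁻¹, ?_⟩
  rintro _ ⟨x, rfl⟩
  exact mul_le_mul (Real.exp_le_exp.2 ((le_abs_self _).trans (hM x))) (gaussianPDFReal_le m v x)
    (gaussianPDFReal_nonneg m v x) (Real.exp_nonneg _)

lemma exp_mul_gaussianPDFReal_rpow_mul_rpow_le (hv : v ≠ 0) {f h : ℝ → ℝ}
    (hfh : ∀ x y, h x ≤ f y + (x - y) ^ 2 / (2 * v)) (ht : 0 < t) (ht₁ : t < 1) (x y : ℝ) :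
    (exp (h x) * gaussianPDFReal m v x) ^ t * gaussianPDFReal m v y ^ (1 - t) ≤
      exp (t * f (t * x + (1 - t) * y)) * gaussianPDFReal m v (t * x + (1 - t) * y) := by
  have hcost : t * h x ≤ t * f (t * x + (1 - t) * y) +
      t * (1 - t) * ((x - y) ^ 2 / (2 * v)) := by
    have hfh_mid := mul_le_mul_of_nonneg_left (hfh x (t * x + (1 - t) * y)) ht.le
    have hmid : (x - (t * x + (1 - t) * y)) ^ 2 = (1 - t) ^ 2 * (x - y) ^ 2 := by ring
    have hsq : (1 - t) ^ 2 * ((x - y) ^ 2 / (2 * v)) ≤ (1 - t) * ((x - y) ^ 2 / (2 * v)) := by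
      gcongr
      nlinarith
    rw [hmid, mul_div_assoc] at hfh_mid
    nlinarith
  have hx := gaussianPDFReal_nonneg m v x
  have hy := gaussianPDFReal_nonneg m v y
  rw [Real.mul_rpow (Real.exp_nonneg _) hx, ← Real.exp_mul,
    ← gaussianPDFReal_rpow_mul_rpow_mul_exp hv (add_sub_cancel t 1) x y, mul_comm (h x)]
  calc _ ≤ exp (t * f (t * x + (1 - t) * y) + t * (1 - t) * ((x - y) ^ 2 / (2 * v))) *
        gaussianPDFReal m v x ^ t * gaussianPDFReal m v y ^ (1 - t) := by gcongr
    _ = _ := by rw [Real.exp_add]; ring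

lemma rpow_integral_exp_le_mgf_gaussianReal (hv : v ≠ 0) {f h : ℝ → ℝ} (hf : Measurable f)
    (hh : Measurable h) (hf_bdd : ∃ M, ∀ x, |f x| ≤ M) (hh_bdd : ∃ M, ∀ x, |h x| ≤ M)
    (hfh : ∀ x y, h x ≤ f y + (x - y) ^ 2 / (2 * v)) (ht : 0 < t) (ht₁ : t < 1) :
    (∫ x, exp (h x) ∂gaussianReal m v) ^ t ≤ mgf f (gaussianReal m v) t := by
  have hs : 0 < 1 - t := by linarith
  have hφ := gaussianPDFReal_nonneg m v
  have hpdf := measurable_gaussianPDFReal m v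
  have hPL := prekopa_leindler (hh.exp.mul hpdf) hpdf ((hf.const_mul t).exp.mul hpdf)
    (fun x => mul_nonneg (Real.exp_nonneg _) (hφ x)) hφ
    (fun x => mul_nonneg (Real.exp_nonneg _) (hφ x))
    (bddAbove_range_exp_mul_gaussianPDFReal hh_bdd)
    ⟨_, Set.forall_mem_range.2 (gaussianPDFReal_le m v)⟩ ht hs (add_sub_cancel t 1)
    (exp_mul_gaussianPDFReal_rpow_mul_rpow_le hv hfh ht ht₁)
  simp only [Pi.mul_apply] at hPL
  rw [← ofReal_integral_gaussianReal_eq hv (by fun_prop) (fun x => Real.exp_nonneg _)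
      (integrable_exp_of_abs_le hh hh_bdd), ← ofReal_integral_gaussianReal_eq hv (by fun_prop)
      (fun x => Real.exp_nonneg _) (integrable_exp_of_abs_le (by fun_prop)
      (exists_abs_const_mul_le hf_bdd t)), lintegral_gaussianPDFReal_eq_one m hv,
    ENNReal.one_rpow, mul_one,
    ENNReal.ofReal_rpow_of_nonneg (integral_nonneg fun x => Real.exp_nonneg _) ht.le] at hPL
  exact (ENNReal.ofReal_le_ofReal_iff (integral_nonneg fun x => Real.exp_nonneg _)).1 hPL

end OneDimension

lemma le_exp_integral_of_rpow_le_mgf {Ω : Type*} [MeasurableSpace Ω] {μ : Measure Ω}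
    [IsProbabilityMeasure μ] {f : Ω → ℝ} (hf : Measurable f) (hf_bdd : ∃ M, ∀ x, |f x| ≤ M) {a : ℝ}
    (ha : 0 < a) (haf : ∀ t ∈ Set.Ioo (0 : ℝ) 1, a ^ t ≤ mgf f μ t) : a ≤ exp (∫ x, f x ∂μ) := by
  have hint (t : ℝ) : Integrable (fun x => exp (t * f x)) μ :=
    integrable_exp_of_abs_le (by fun_prop) (exists_abs_const_mul_le hf_bdd t)
  have hmem : 0 ∈ interior (integrableExpSet f μ) := by
    rw [Set.eq_univ_of_forall (s := integrableExpSet f μ) hint]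
    simp
  have hslope : Tendsto (slope (cgf f μ) 0) (𝓝[>] 0) (𝓝 (∫ x, f x ∂μ)) := by
    have hderiv := (analyticAt_cgf hmem).differentiableAt.hasDerivAt
    rw [deriv_cgf_zero hmem, probReal_univ, div_one] at hderiv
    exact (hasDerivAt_iff_tendsto_slope.1 hderiv).mono_left
      (nhdsWithin_mono _ fun t (ht : 0 < t) => ht.ne')
  have hlog : log a ≤ ∫ x, f x ∂μ := by
    refine ge_of_tendsto hslope ?_
    filter_upwards [Ioo_mem_nhdsGT (zero_lt_one (α := ℝ))] with t ht
    rw [slope_def_field, cgf_zero, sub_zero, sub_zero, le_div_iff₀ ht.1, mul_comm,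
      ← Real.log_rpow ha]
    exact Real.log_le_log (by positivity) (haf t ht)
  exact (Real.log_le_iff_le_exp ha).1 hlog

theorem infConvolutionInequality_gaussianReal (m : ℝ) {v : ℝ≥0} (hv : v ≠ 0) :
    InfConvolutionInequality (gaussianReal m v) (fun x y => (x - y) ^ 2 / (2 * v)) :=
  fun _ _ hf hh hf_bdd hh_bdd hfh => le_exp_integral_of_rpow_le_mgf hf hf_bdd
    (integral_exp_pos (integrable_exp_of_abs_le hh hh_bdd)) fun _ ht =>
      rpow_integral_exp_le_mgf_gaussianReal hv hf hh hf_bdd hh_bdd hfh ht.1 ht.2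

section Product

variable {Ω Ω' : Type*} [MeasurableSpace Ω] [MeasurableSpace Ω'] {μ : Measure Ω} {ν : Measure Ω'}
  {c : Ω → Ω → ℝ} {c' : Ω' → Ω' → ℝ}

namespace InfConvolutionInequality

lemma map (hμ : InfConvolutionInequality μ c) {φ : Ω → Ω'} (hφ : Measurable φ)
    (hc : ∀ x y, c' (φ x) (φ y) ≤ c x y) : InfConvolutionInequality (μ.map φ) c' := by
  rintro f h hf hh ⟨M, hM⟩ ⟨N, hN⟩ hfh
  rw [integral_map hφ.aemeasurable (by fun_prop), integral_map hφ.aemeasurable (by fun_prop)]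
  exact hμ _ _ (hf.comp hφ) (hh.comp hφ) ⟨M, fun x => hM _⟩ ⟨N, fun x => hN _⟩ fun x y =>
    (hfh _ _).trans (add_le_add_right (hc x y) _)

lemma integral_exp_le_of_le_add [IsProbabilityMeasure μ] (hμ : InfConvolutionInequality μ c)
    {f h : Ω → ℝ} (hf : Measurable f) (hh : Measurable h) (hf_bdd : ∃ M, ∀ x, |f x| ≤ M)
    (hh_bdd : ∃ M, ∀ x, |h x| ≤ M) {a : ℝ} (hfh : ∀ x y, h x ≤ f y + c x y + a) :
    log (∫ x, exp (h x) ∂μ) ≤ ∫ x, f x ∂μ + a := by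
  obtain ⟨M, hM⟩ := hf_bdd
  have hint : Integrable f μ :=
    Integrable.of_bound hf.aestronglyMeasurable M (ae_of_all _ hM)
  rw [Real.log_le_iff_le_exp (integral_exp_pos (integrable_exp_of_abs_le hh hh_bdd))]
  have := hμ (fun x => f x + a) h (hf.add_const a) hh
    ⟨M + |a|, fun x => (abs_add_le _ _).trans (add_le_add_left (hM x) _)⟩ hh_bdd
    fun x y => by linarith [hfh x y]
  rwa [integral_add hint (integrable_const a), integral_const, probReal_univ, one_smul] at this

end InfConvolutionInequality

lemma abs_log_integral_exp_le [IsProbabilityMeasure μ] {f : Ω → ℝ} (hf : Measurable f) {M : ℝ}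
    (hM : ∀ x, |f x| ≤ M) : |log (∫ x, exp (f x) ∂μ)| ≤ M := by
  have hint : Integrable (fun x => exp (f x)) μ := integrable_exp_of_abs_le hf ⟨M, hM⟩
  have hpos : 0 < ∫ x, exp (f x) ∂μ := integral_exp_pos hint
  rw [abs_le, Real.log_le_iff_le_exp hpos, Real.le_log_iff_exp_le hpos]
  constructor
  · simpa using integral_mono (integrable_const (μ := μ) (exp (-M))) hint fun x =>
      Real.exp_le_exp.2 (neg_le_of_abs_le (hM x))
  · simpa using integral_mono hint (integrable_const (μ := μ) (exp M)) fun x =>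
      Real.exp_le_exp.2 (le_of_abs_le (hM x))

lemma abs_integral_le_of_abs_le [IsProbabilityMeasure μ] {f : Ω → ℝ} {M : ℝ}
    (hM : ∀ x, |f x| ≤ M) : |∫ x, f x ∂μ| ≤ M := by
  simpa using norm_integral_le_of_norm_le_const (μ := μ) (f := f) (ae_of_all _ hM)

namespace InfConvolutionInequality

lemma prod [IsProbabilityMeasure μ] [IsProbabilityMeasure ν] (hμ : InfConvolutionInequality μ c)
    (hν : InfConvolutionInequality ν c') :
    InfConvolutionInequality (μ.prod ν) (fun x y => c x.1 y.1 + c' x.2 y.2) := by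
  rintro f h hf hh ⟨M, hM⟩ ⟨N, hN⟩ hfh
  have hf_int : Integrable f (μ.prod ν) :=
    Integrable.of_bound hf.aestronglyMeasurable M (ae_of_all _ hM)
  have hh_int : Integrable (fun x => exp (h x)) (μ.prod ν) := integrable_exp_of_abs_le hh ⟨N, hN⟩
  have hexp_log (y : Ω') : exp (log (∫ x, exp (h (x, y)) ∂μ)) = ∫ x, exp (h (x, y)) ∂μ :=
    Real.exp_log <| integral_exp_pos <|
      integrable_exp_of_abs_le (by fun_prop) ⟨N, fun x => hN (x, y)⟩
  have hinner (x₂ y₂ : Ω') :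
      log (∫ x, exp (h (x, x₂)) ∂μ) ≤ ∫ x, f (x, y₂) ∂μ + c' x₂ y₂ :=
    hμ.integral_exp_le_of_le_add (by fun_prop) (by fun_prop) ⟨M, fun x => hM (x, y₂)⟩
      ⟨N, fun x => hN (x, x₂)⟩ fun x y => by linarith [hfh (x, x₂) (y, y₂)]
  have houter := hν (fun y => ∫ x, f (x, y) ∂μ) (fun y => log (∫ x, exp (h (x, y)) ∂μ))
    hf.stronglyMeasurable.integral_prod_left'.measurable
    (Real.measurable_log.comp hh.exp.stronglyMeasurable.integral_prod_left'.measurable)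
    ⟨M, fun y => abs_integral_le_of_abs_le fun x => hM (x, y)⟩
    ⟨N, fun y => abs_log_integral_exp_le (by fun_prop) fun x => hN (x, y)⟩ hinner
  simp only [hexp_log] at houter
  rwa [integral_prod_symm _ hh_int, integral_prod_symm _ hf_int]

lemma pi {m : ℕ} {Ω : Fin m → Type*} [∀ i, MeasurableSpace (Ω i)] {μ : ∀ i, Measure (Ω i)}
    [∀ i, IsProbabilityMeasure (μ i)] {c : ∀ i, Ω i → Ω i → ℝ}
    (h : ∀ i, InfConvolutionInequality (μ i) (c i)) :
    InfConvolutionInequality (Measure.pi μ) (fun x y => ∑ i, c i (x i) (y i)) := by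
  induction m with
  | zero =>
    intro f h _ _ _ _ hfh
    simpa [Subsingleton.elim _ (isEmptyElim : ∀ i, Ω i)] using hfh isEmptyElim isEmptyElim
  | succ m ih =>
    rw [← (measurePreserving_piFinSuccAbove μ 0).symm.map_eq]
    refine ((h 0).prod (ih fun i => h (Fin.succAbove 0 i))).map
      (MeasurableEquiv.measurable _) fun x y => ?_
    simp only [Fin.sum_univ_succAbove _ 0, MeasurableEquiv.piFinSuccAbove_symm_apply,
      Fin.insertNthEquiv_apply, Fin.insertNth_apply_same, Fin.insertNth_apply_succAbove, le_refl]

end InfConvolutionInequality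

end Product

section StdGaussian

variable (E : Type*) [NormedAddCommGroup E] [InnerProductSpace ℝ E] [FiniteDimensional ℝ E]
  [MeasurableSpace E] [BorelSpace E]

theorem infConvolutionInequality_stdGaussian :
    InfConvolutionInequality (stdGaussian E) (fun x y => dist x y ^ 2 / 2) := by
  refine (InfConvolutionInequality.pi fun _ =>
    infConvolutionInequality_gaussianReal 0 one_ne_zero).map (by fun_prop) fun x y => ?_
  rw [dist_eq_norm, ← sum_sub_distrib]
  simp only [← sub_smul]
  rw [← (stdOrthonormalBasis ℝ E).sum_sq_norm_inner_right]
  simp [inner_sum, inner_smul_right, orthonormal_iff_ite.1 (stdOrthonormalBasis ℝ E).orthonormal,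
    Finset.sum_div]

end StdGaussian

section Lipschitz

variable {Ω : Type*} [PseudoMetricSpace Ω] {F : Ω → ℝ} {K : ℝ≥0}

lemma exists_bounded_lipschitzWith_tendsto (hF : LipschitzWith K F) :
    ∃ G : ℕ → Ω → ℝ, (∀ N, LipschitzWith K (G N)) ∧ (∀ (N : ℕ) x, |G N x| ≤ N) ∧
      (∀ N x, |G N x| ≤ |F x|) ∧ ∀ x, Tendsto (G · x) atTop (𝓝 (F x)) := by
  refine ⟨fun N x => max (min (F x) N) (-N), fun N => (hF.min_const _).max_const _,
    fun N x => ?_, fun N x => ?_, fun x => ?_⟩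
  · have := Nat.cast_nonneg (α := ℝ) N
    exact abs_le.2 ⟨le_max_right _ _, max_le (min_le_right _ _) (by linarith)⟩
  · have := Nat.cast_nonneg (α := ℝ) N
    exact abs_le.2 ⟨le_max_of_le_left (le_min (neg_abs_le _) (by linarith [abs_nonneg (F x)])),
      max_le ((min_le_left _ _).trans (le_abs_self _)) (by linarith [abs_nonneg (F x)])⟩
  · refine tendsto_const_nhds.congr' ?_
    filter_upwards [eventually_ge_atTop ⌈|F x|⌉₊] with N hN
    have hFN := abs_le.1 (Nat.ceil_le.1 hN)
    rw [min_eq_left hFN.2, max_eq_left hFN.1]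

variable [MeasurableSpace Ω] [OpensMeasurableSpace Ω] {μ : Measure Ω} [IsProbabilityMeasure μ]

namespace InfConvolutionInequality

lemma integral_exp_mul_le_of_abs_le (hμ : InfConvolutionInequality μ (fun x y => dist x y ^ 2 / 2))
    (hF : LipschitzWith K F) (hF_bdd : ∃ M, ∀ x, |F x| ≤ M) (l : ℝ) :
    ∫ x, exp (l * F x) ∂μ ≤ exp (l * ∫ x, F x ∂μ + K ^ 2 * l ^ 2 / 2) := by
  have hF_meas := hF.continuous.measurable
  have hpoint (x y : Ω) : l * F x ≤ l * F y + dist x y ^ 2 / 2 + K ^ 2 * l ^ 2 / 2 := by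
    have hdist : |l * (F x - F y)| ≤ |l| * (K * dist x y) := by
      rw [abs_mul]
      exact mul_le_mul_of_nonneg_left (hF.dist_le_mul x y) (abs_nonneg l)
    nlinarith [le_abs_self (l * (F x - F y)), sq_nonneg (|l| * K - dist x y), sq_abs l]
  have hbdd := exists_abs_const_mul_le hF_bdd l
  have hlog := hμ.integral_exp_le_of_le_add (hF_meas.const_mul l) (hF_meas.const_mul l) hbdd hbdd
    hpoint
  rwa [Real.log_le_iff_le_exp (integral_exp_pos (integrable_exp_of_abs_le (by fun_prop) hbdd)),
    integral_const_mul] at hlog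

lemma lintegral_exp_mul_le (hμ : InfConvolutionInequality μ (fun x y => dist x y ^ 2 / 2))
    (hF : LipschitzWith K F) (hF_int : Integrable F μ) (l : ℝ) :
    ∫⁻ x, ENNReal.ofReal (exp (l * F x)) ∂μ ≤
      ENNReal.ofReal (exp (l * ∫ x, F x ∂μ + K ^ 2 * l ^ 2 / 2)) := by
  obtain ⟨G, hG, hG_bdd, hG_abs, hG_tendsto⟩ := exists_bounded_lipschitzWith_tendsto hF
  have hG_meas (N : ℕ) : Measurable (G N) := (hG N).continuous.measurable
  have hmean : Tendsto (fun N => ∫ x, G N x ∂μ) atTop (𝓝 (∫ x, F x ∂μ)) :=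
    tendsto_integral_of_dominated_convergence (fun x => |F x|)
      (fun N => (hG_meas N).aestronglyMeasurable) hF_int.abs
      (fun N => ae_of_all _ (hG_abs N)) (ae_of_all _ hG_tendsto)
  calc ∫⁻ x, ENNReal.ofReal (exp (l * F x)) ∂μ
      = ∫⁻ x, liminf (fun N => ENNReal.ofReal (exp (l * G N x))) atTop ∂μ := by
        refine lintegral_congr fun x => (Tendsto.liminf_eq ?_).symm
        exact ENNReal.tendsto_ofReal
          ((Real.continuous_exp.tendsto _).comp ((hG_tendsto x).const_mul l))
    _ ≤ liminf (fun N => ∫⁻ x, ENNReal.ofReal (exp (l * G N x)) ∂μ) atTop :=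
        lintegral_liminf_le fun N => ((hG_meas N).const_mul l).exp.ennreal_ofReal
    _ ≤ liminf (fun N => ENNReal.ofReal (exp (l * ∫ x, G N x ∂μ + K ^ 2 * l ^ 2 / 2))) atTop := by
        refine liminf_le_liminf (Eventually.of_forall fun N => ?_)
        rw [← ofReal_integral_eq_lintegral_ofReal (integrable_exp_of_abs_le
          ((hG_meas N).const_mul l) (exists_abs_const_mul_le ⟨N, hG_bdd N⟩ l))
          (ae_of_all _ fun x => Real.exp_nonneg _)]
        exact ENNReal.ofReal_le_ofReal
          (hμ.integral_exp_mul_le_of_abs_le (hG N) ⟨N, hG_bdd N⟩ l)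
    _ = ENNReal.ofReal (exp (l * ∫ x, F x ∂μ + K ^ 2 * l ^ 2 / 2)) :=
        (ENNReal.tendsto_ofReal ((Real.continuous_exp.tendsto _).comp
          ((hmean.const_mul l).add_const _))).liminf_eq

theorem hasSubgaussianMGF (hμ : InfConvolutionInequality μ (fun x y => dist x y ^ 2 / 2))
    (hF : LipschitzWith K F) (hF_int : Integrable F μ) :
    HasSubgaussianMGF (fun x => F x - ∫ y, F y ∂μ) (K ^ 2) μ := by
  have hF_meas := hF.continuous.measurable
  have hint (l : ℝ) : Integrable (fun x => exp (l * F x)) μ :=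
    ⟨by fun_prop, (hasFiniteIntegral_iff_ofReal (ae_of_all _ fun x => Real.exp_nonneg _)).2
      ((hμ.lintegral_exp_mul_le hF hF_int l).trans_lt ENNReal.ofReal_lt_top)⟩
  have hsub (l : ℝ) (x : Ω) : exp (l * (F x - ∫ y, F y ∂μ)) =
      exp (l * F x) * exp (-(l * ∫ y, F y ∂μ)) := by
    rw [← Real.exp_add, mul_sub, sub_eq_add_neg]
  refine ⟨fun l => by simpa only [hsub] using (hint l).mul_const _, fun l => ?_⟩
  have hmgf := hμ.lintegral_exp_mul_le hF hF_int l
  rw [← ofReal_integral_eq_lintegral_ofReal (hint l) (ae_of_all _ fun x => Real.exp_nonneg _),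
    ENNReal.ofReal_le_ofReal_iff (Real.exp_nonneg _)] at hmgf
  calc mgf (fun x => F x - ∫ y, F y ∂μ) μ l
      = (∫ x, exp (l * F x) ∂μ) * exp (-(l * ∫ y, F y ∂μ)) := by
        simp only [mgf, hsub, integral_mul_const]
    _ ≤ exp (l * ∫ x, F x ∂μ + K ^ 2 * l ^ 2 / 2) * exp (-(l * ∫ y, F y ∂μ)) := by gcongr
    _ = exp (((K ^ 2 : ℝ≥0) : ℝ) * l ^ 2 / 2) := by
        rw [← Real.exp_add, NNReal.coe_pow]
        congr 1
        ring

end InfConvolutionInequality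

end Lipschitz

end InfConvolution

section NormMoments

open Module (finrank)
open Real (Gamma)

variable {E : Type*} [NormedAddCommGroup E] [InnerProductSpace ℝ E]

/-- The density `(2π) ^ (-dim E / 2) * exp (-‖x‖² / 2)` of the standard Gaussian measure of `E`
with respect to the Lebesgue measure. -/
def stdGaussianPDFReal (E : Type*) [NormedAddCommGroup E] [InnerProductSpace ℝ E] (x : E) : ℝ :=
  ((2 * Real.pi) ^ (finrank ℝ E / 2 : ℝ))⁻¹ * Real.exp (-(1 / 2) * ‖x‖ ^ 2)

lemma stdGaussianPDFReal_nonneg (x : E) : 0 ≤ stdGaussianPDFReal E x := by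
  unfold stdGaussianPDFReal
  positivity

variable [MeasurableSpace E] [BorelSpace E]

lemma measurable_stdGaussianPDFReal : Measurable (stdGaussianPDFReal E) := by
  unfold stdGaussianPDFReal
  fun_prop

variable [FiniteDimensional ℝ E]

lemma integral_stdGaussianPDFReal : ∫ x : E, stdGaussianPDFReal E x = 1 := by
  simp only [stdGaussianPDFReal]
  rw [integral_const_mul, GaussianFourier.integral_rexp_neg_mul_sq_norm (by norm_num),
    div_div_eq_mul_div, div_one, mul_comm Real.pi]
  exact inv_mul_cancel₀ (by positivity)

lemma isProbabilityMeasure_withDensity_stdGaussianPDFReal : IsProbabilityMeasure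
    ((volume : Measure E).withDensity fun x => ENNReal.ofReal (stdGaussianPDFReal E x)) := by
  have hint : Integrable (stdGaussianPDFReal E) :=
    .of_integral_ne_zero (by simp [integral_stdGaussianPDFReal])
  refine ⟨?_⟩
  rw [withDensity_apply _ MeasurableSet.univ, Measure.restrict_univ,
    ← ofReal_integral_eq_lintegral_ofReal hint (ae_of_all _ stdGaussianPDFReal_nonneg),
    integral_stdGaussianPDFReal, ENNReal.ofReal_one]

lemma integral_withDensity_stdGaussianPDFReal {G : Type*} [NormedAddCommGroup G] [NormedSpace ℝ G]
    (f : E → G) :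
    ∫ x, f x ∂(volume : Measure E).withDensity (fun x => ENNReal.ofReal (stdGaussianPDFReal E x)) =
      ∫ x, stdGaussianPDFReal E x • f x := by
  rw [integral_withDensity_eq_integral_toReal_smul measurable_stdGaussianPDFReal.ennreal_ofReal
    (by simp)]
  simp only [ENNReal.toReal_ofReal (stdGaussianPDFReal_nonneg _)]

lemma stdGaussian_eq_withDensity : stdGaussian E =
    (volume : Measure E).withDensity fun x => ENNReal.ofReal (stdGaussianPDFReal E x) := by
  have := isProbabilityMeasure_withDensity_stdGaussianPDFReal (E := E)
  refine Measure.ext_of_charFun (funext fun w => ?_)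
  have hintegrand (v : E) : stdGaussianPDFReal E v • Complex.exp (inner ℝ v w * Complex.I) =
      (((2 * Real.pi) ^ (finrank ℝ E / 2 : ℝ))⁻¹ : ℝ) *
        Complex.exp (-(1 / 2) * ‖v‖ ^ 2 + Complex.I * inner ℝ w v) := by
    rw [stdGaussianPDFReal, Complex.exp_add, real_inner_comm, Complex.real_smul]
    push_cast
    ring_nf
  have hconst : ((Real.pi : ℂ) / (1 / 2)) ^ ((finrank ℝ E : ℂ) / 2) =
      (((2 * Real.pi) ^ (finrank ℝ E / 2 : ℝ) : ℝ) : ℂ) := by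
    rw [Complex.ofReal_cpow (by positivity)]
    push_cast
    congr 1
    ring
  rw [charFun_stdGaussian, charFun_apply, integral_withDensity_stdGaussianPDFReal]
  simp_rw [hintegrand]
  rw [integral_const_mul, GaussianFourier.integral_cexp_neg_mul_sq_norm_add (by norm_num), hconst,
    ← mul_assoc, ← Complex.ofReal_mul, inv_mul_cancel₀ (by positivity), Complex.I_sq]
  push_cast
  ring_nf

lemma integral_norm_rpow_mul_exp [Nontrivial E] {p : ℝ} (hp : -(finrank ℝ E) < p) :
    ∫ x : E, ‖x‖ ^ p * Real.exp (-(1 / 2) * ‖x‖ ^ 2) =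
      finrank ℝ E * (volume : Measure E).real (Metric.ball 0 1) *
        ((1 / 2) ^ (-(finrank ℝ E + p) / 2) * (1 / 2) * Gamma ((finrank ℝ E + p) / 2)) := by
  have hm : 1 ≤ finrank ℝ E := Module.finrank_pos
  have hradial := integral_rpow_mul_exp_neg_mul_rpow (p := 2) (q := finrank ℝ E + p - 1)
    (b := 1 / 2) (by norm_num) (by linarith) (by norm_num)
  rw [sub_add_cancel] at hradial
  rw [integral_fun_norm_addHaar volume fun r : ℝ => r ^ p * Real.exp (-(1 / 2) * r ^ 2), ← hradial,
    nsmul_eq_mul, smul_eq_mul, mul_assoc]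
  congr 2
  refine setIntegral_congr_fun measurableSet_Ioi fun r (hr : 0 < r) => ?_
  rw [smul_eq_mul, ← mul_assoc, ← Real.rpow_natCast, ← Real.rpow_natCast r 2, ← Real.rpow_add hr,
    Nat.cast_sub hm, Nat.cast_one, Nat.cast_ofNat, sub_add_eq_add_sub]

theorem integral_norm_rpow_stdGaussian [Nontrivial E] {p : ℝ} (hp : -(finrank ℝ E) < p) :
    ∫ x, ‖x‖ ^ p ∂stdGaussian E =
      2 ^ (p / 2) * Gamma ((finrank ℝ E + p) / 2) / Gamma ((finrank ℝ E : ℝ) / 2) := by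
  have hm : (0 : ℝ) < finrank ℝ E := mod_cast Module.finrank_pos (R := ℝ) (M := E)
  have hΓ : 0 < Gamma ((finrank ℝ E : ℝ) / 2) := Real.Gamma_pos_of_pos (by positivity)
  have hradial {q : ℝ} (hq : -(finrank ℝ E) < q) : ∫ x, ‖x‖ ^ q ∂stdGaussian E =
      ((2 * Real.pi) ^ (finrank ℝ E / 2 : ℝ))⁻¹ * (finrank ℝ E *
        (volume : Measure E).real (Metric.ball 0 1) * ((1 / 2) ^ (-(finrank ℝ E + q) / 2) *
          (1 / 2) * Gamma ((finrank ℝ E + q) / 2))) := by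
    rw [stdGaussian_eq_withDensity, integral_withDensity_stdGaussianPDFReal,
      ← integral_norm_rpow_mul_exp hq, ← integral_const_mul]
    refine integral_congr_ae (ae_of_all _ fun x => ?_)
    simp only [stdGaussianPDFReal, smul_eq_mul]
    ring
  have hnormalization := hradial (q := 0) (by linarith)
  have hpow : (1 / 2 : ℝ) ^ (-(finrank ℝ E + p) / 2) =
      2 ^ (p / 2) * (1 / 2) ^ (-(finrank ℝ E + 0 : ℝ) / 2) := by
    rw [one_div, Real.inv_rpow zero_le_two, Real.inv_rpow zero_le_two, ← Real.rpow_neg zero_le_two,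
      ← Real.rpow_neg zero_le_two, ← Real.rpow_add zero_lt_two]
    congr 1
    ring
  simp only [Real.rpow_zero, integral_const, probReal_univ, one_smul] at hnormalization
  rw [hradial hp, eq_div_iff hΓ.ne', hpow]
  rw [add_zero] at hnormalization ⊢
  linear_combination -(2 ^ (p / 2) * Gamma ((finrank ℝ E + p) / 2)) * hnormalization

lemma integral_norm_sq_stdGaussian : ∫ x, ‖x‖ ^ 2 ∂stdGaussian E = finrank ℝ E := by
  rcases subsingleton_or_nontrivial E with hE | hE
  · simp [Subsingleton.elim _ (0 : E), Module.finrank_zero_of_subsingleton]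
  have hm : (0 : ℝ) < finrank ℝ E := mod_cast Module.finrank_pos (R := ℝ) (M := E)
  have hΓ : 0 < Gamma ((finrank ℝ E : ℝ) / 2) := Real.Gamma_pos_of_pos (by positivity)
  have hmoment := integral_norm_rpow_stdGaussian (E := E) (p := 2) (by linarith)
  rw [add_div, div_self two_ne_zero, Real.Gamma_add_one (by positivity), Real.rpow_one,
    eq_div_iff hΓ.ne'] at hmoment
  simp only [Real.rpow_ofNat] at hmoment
  exact mul_right_cancel₀ hΓ.ne' (hmoment.trans (by ring))

lemma mul_Gamma_le_sqrt_mul_Gamma_add_half {x : ℝ} (hx : 0 < x) :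
    x * Gamma x ≤ √(x + 1 / 2) * Gamma (x + 1 / 2) := by
  have hΓ : 0 < Gamma (x + 1 / 2) := Real.Gamma_pos_of_pos (by positivity)
  have hconvex := Real.Gamma_mul_add_mul_le_rpow_Gamma_mul_rpow_Gamma (s := x + 1 / 2)
    (t := x + 1 / 2 + 1) (a := 1 / 2) (b := 1 / 2) (by positivity) (by positivity) (by norm_num)
    (by norm_num) (by norm_num)
  rw [show 1 / 2 * (x + 1 / 2) + 1 / 2 * (x + 1 / 2 + 1) = x + 1 by ring,
    Real.Gamma_add_one hx.ne', Real.Gamma_add_one (by positivity),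
    Real.mul_rpow (by positivity) hΓ.le, ← Real.sqrt_eq_rpow, ← Real.sqrt_eq_rpow,
    mul_left_comm, Real.mul_self_sqrt hΓ.le] at hconvex
  exact hconvex

lemma finrank_div_sqrt_le_integral_norm_stdGaussian :
    finrank ℝ E / √(finrank ℝ E + 1) ≤ ∫ x, ‖x‖ ∂stdGaussian E := by
  rcases subsingleton_or_nontrivial E with hE | hE
  · simp [Subsingleton.elim _ (0 : E), Module.finrank_zero_of_subsingleton]
  have hm : (0 : ℝ) < finrank ℝ E := mod_cast Module.finrank_pos (R := ℝ) (M := E)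
  have hΓ : 0 < Gamma ((finrank ℝ E : ℝ) / 2) := Real.Gamma_pos_of_pos (by positivity)
  have hmoment := integral_norm_rpow_stdGaussian (E := E) (p := 1) (by linarith)
  simp only [Real.rpow_one] at hmoment
  have hratio := mul_Gamma_le_sqrt_mul_Gamma_add_half (half_pos hm)
  rw [← add_div, Real.sqrt_div (by positivity)] at hratio
  rw [hmoment, div_le_div_iff₀ (by positivity) hΓ, ← Real.sqrt_eq_rpow]
  calc finrank ℝ E * Gamma ((finrank ℝ E : ℝ) / 2)
      = √2 * √2 * (finrank ℝ E / 2 * Gamma ((finrank ℝ E : ℝ) / 2)) := by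
        rw [Real.mul_self_sqrt zero_le_two]
        ring
    _ ≤ √2 * √2 * (√(finrank ℝ E + 1) / √2 * Gamma ((finrank ℝ E + 1) / 2)) := by gcongr
    _ = √2 * Gamma ((finrank ℝ E + 1) / 2) * √(finrank ℝ E + 1) := by field_simp

lemma sub_half_div_sqrt_le_div_sqrt_add_one {x : ℝ} (hx : 1 ≤ x) :
    (x - 1 / 2) / √x ≤ x / √(x + 1) := by
  rw [div_le_div_iff₀ (by positivity) (by positivity)]
  refine abs_le_of_sq_le_sq' ?_ (by positivity) |>.2
  rw [mul_pow, mul_pow, Real.sq_sqrt (by positivity), Real.sq_sqrt (by positivity)]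
  nlinarith

end NormMoments

section RowCombination

open ContinuousLinearMap (adjoint)

lemma norm_adjoint_apply_of_comp_adjoint_eq_id {E F : Type*} [NormedAddCommGroup E]
    [InnerProductSpace ℝ E] [CompleteSpace E] [NormedAddCommGroup F] [InnerProductSpace ℝ F]
    [CompleteSpace F] {L : E →L[ℝ] F} (hL : L ∘L adjoint L = .id ℝ F) (y : F) :
    ‖adjoint L y‖ = ‖y‖ := by
  have hinner : ⟪adjoint L y, adjoint L y⟫ = ⟪y, y⟫ := by
    rw [ContinuousLinearMap.adjoint_inner_left, ← ContinuousLinearMap.comp_apply, hL,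
      ContinuousLinearMap.id_apply]
  rw [norm_eq_sqrt_real_inner, hinner, ← norm_eq_sqrt_real_inner]

variable {E : Type*} [NormedAddCommGroup E] [NormedSpace ℝ E] {ι κ ν : Type*} [Fintype ι]

/-- The action of a matrix `A` on families of vectors, sending `x` to the family with entries
`∑ i, A l i • x i`. For `E = ℝᵈ` this is the product of `A` with the matrix whose rows are `x`. -/
def rowCombination (E : Type*) [NormedAddCommGroup E] [NormedSpace ℝ E] (A : Matrix κ ι ℝ) :
    PiLp 2 (fun _ : ι => E) →L[ℝ] PiLp 2 (fun _ : κ => E) :=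
  (PiLp.continuousLinearEquiv 2 ℝ fun _ : κ => E).symm.toContinuousLinearMap ∘L
    ContinuousLinearMap.pi fun l => ∑ i, A l i • PiLp.proj 2 (fun _ : ι => E) i

lemma rowCombination_apply (A : Matrix κ ι ℝ) (x : PiLp 2 fun _ : ι => E) (l : κ) :
    rowCombination E A x l = ∑ i, A l i • x i := by
  simp [rowCombination]

lemma rowCombination_one [DecidableEq ι] :
    rowCombination E (1 : Matrix ι ι ℝ) = .id ℝ (PiLp 2 fun _ : ι => E) := by
  ext x l
  simp [rowCombination_apply, Matrix.one_apply]

variable [Fintype κ]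

lemma rowCombination_mul (A : Matrix ν κ ℝ) (B : Matrix κ ι ℝ) :
    rowCombination E (A * B) = rowCombination E A ∘L rowCombination E B := by
  ext x l
  simp only [ContinuousLinearMap.comp_apply, rowCombination_apply, Matrix.mul_apply,
    Finset.sum_smul, Finset.smul_sum, mul_smul]
  exact Finset.sum_comm

variable {H : Type*} [NormedAddCommGroup H] [InnerProductSpace ℝ H] [CompleteSpace H]

lemma adjoint_rowCombination (A : Matrix κ ι ℝ) :
    adjoint (rowCombination H A) = rowCombination H Aᵀ := by
  refine ((ContinuousLinearMap.eq_adjoint_iff _ _).2 fun y x => ?_).symm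
  simp only [PiLp.inner_apply, rowCombination_apply, sum_inner, inner_sum, real_inner_smul_left,
    real_inner_smul_right, Matrix.transpose_apply]
  exact Finset.sum_comm

lemma rowCombination_comp_adjoint [DecidableEq κ] {A : Matrix κ ι ℝ} (hA : A * Aᵀ = 1) :
    rowCombination H A ∘L adjoint (rowCombination H A) = .id ℝ _ := by
  rw [adjoint_rowCombination, ← rowCombination_mul, hA, rowCombination_one]

lemma norm_rowCombination_apply [DecidableEq ι] {A : Matrix κ ι ℝ} (hA : Aᵀ * A = 1)
    (x : PiLp 2 fun _ : ι => H) : ‖rowCombination H A x‖ = ‖x‖ := by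
  have hA' : Aᵀ * Aᵀᵀ = 1 := by rwa [Matrix.transpose_transpose]
  simpa only [adjoint_rowCombination, Matrix.transpose_transpose] using
    norm_adjoint_apply_of_comp_adjoint_eq_id (rowCombination_comp_adjoint hA') x

end RowCombination

section GaussianImages

open ContinuousLinearMap (adjoint)
open WithLp (toLp)

variable {E F : Type*} [NormedAddCommGroup E] [InnerProductSpace ℝ E] [FiniteDimensional ℝ E]
  [MeasurableSpace E] [BorelSpace E] [NormedAddCommGroup F] [InnerProductSpace ℝ F]
  [FiniteDimensional ℝ F] [MeasurableSpace F] [BorelSpace F] {ι κ : Type*} [Fintype ι] [Fintype κ]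

theorem map_stdGaussian_of_comp_adjoint_eq_id {L : E →L[ℝ] F} (hL : L ∘L adjoint L = .id ℝ F) :
    (stdGaussian E).map L = stdGaussian F := by
  have : IsProbabilityMeasure ((stdGaussian E).map L) :=
    Measure.isProbabilityMeasure_map L.continuous.aemeasurable
  refine Measure.ext_of_charFun (funext fun y => ?_)
  have hpullback : charFun ((stdGaussian E).map L) y = charFun (stdGaussian E) (adjoint L y) := by
    rw [charFun_apply, charFun_apply, integral_map L.continuous.aemeasurable (by fun_prop)]
    simp only [ContinuousLinearMap.adjoint_inner_right]
  rw [hpullback, charFun_stdGaussian, charFun_stdGaussian,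
    norm_adjoint_apply_of_comp_adjoint_eq_id hL]

lemma map_orthogonalProjectionOnto_stdGaussian (W : Submodule ℝ E) :
    (stdGaussian E).map W.orthogonalProjectionOnto = stdGaussian W := by
  refine map_stdGaussian_of_comp_adjoint_eq_id ?_
  rw [← W.adjoint_subtypeL, ContinuousLinearMap.adjoint_adjoint, W.adjoint_subtypeL]
  exact ContinuousLinearMap.ext W.orthogonalProjectionOnto_mem_subspace_eq_self

lemma map_rowCombination_stdGaussian [DecidableEq κ] {A : Matrix κ ι ℝ} (hA : A * Aᵀ = 1) :
    (stdGaussian (PiLp 2 fun _ : ι => E)).map (rowCombination E A) =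
      stdGaussian (PiLp 2 fun _ : κ => E) :=
  map_stdGaussian_of_comp_adjoint_eq_id (rowCombination_comp_adjoint hA)

lemma map_toLp_pi_stdGaussian :
    (Measure.pi fun _ : ι => stdGaussian E).map (toLp 2) = stdGaussian (PiLp 2 fun _ : ι => E) := by
  have : IsProbabilityMeasure ((Measure.pi fun _ : ι => stdGaussian E).map (toLp 2)) :=
    Measure.isProbabilityMeasure_map (by fun_prop)
  refine Measure.ext_of_charFun (funext fun y => ?_)
  rw [charFun_pi, charFun_stdGaussian, ← Complex.ofReal_pow, PiLp.norm_sq_eq_of_L2]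
  simp only [charFun_stdGaussian, ← Complex.exp_sum]
  push_cast
  rw [← Finset.sum_neg_distrib, Finset.sum_div]

end GaussianImages

section GramSchmidt

open InnerProductSpace (gramSchmidt gramSchmidtNormed)
open Module (finrank)
open Submodule (span)

section

variable {𝕜 E : Type*} [RCLike 𝕜] [NormedAddCommGroup E] [InnerProductSpace 𝕜 E]
  {ι κ : Type*} [Fintype κ]

lemma exists_orthonormalBasis_extension_of_embedding [FiniteDimensional 𝕜 E]
    (hκ : finrank 𝕜 E = Fintype.card κ) (φ : ι ↪ κ) {v : ι → E} {s : Set ι}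
    (hv : Orthonormal 𝕜 (s.domRestrict v)) :
    ∃ b : OrthonormalBasis κ 𝕜 E, ∀ i ∈ s, b (φ i) = v i := by
  let σ : s ≃ φ '' s := Equiv.Set.image φ s φ.injective
  have hσ : s.domRestrict v ∘ σ.symm = (φ '' s).domRestrict (Function.extend φ v 0) := by
    funext j
    obtain ⟨i, rfl⟩ := σ.surjective j
    simp [σ, φ.injective.extend_apply]
  obtain ⟨b, hb⟩ := Orthonormal.exists_orthonormalBasis_extension_of_card_eq hκ
    (hσ ▸ hv.comp σ.symm σ.symm.injective)
  exact ⟨b, fun i hi => by rw [hb _ (Set.mem_image_of_mem φ hi), φ.injective.extend_apply]⟩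

variable [LinearOrder ι] [LocallyFiniteOrderBot ι] [WellFoundedLT ι]

lemma gramSchmidt_mem_orthogonal_span_Iio (f : ι → E) (i : ι) :
    gramSchmidt 𝕜 f i ∈ (span 𝕜 (f '' Set.Iio i))ᗮ := by
  rw [← InnerProductSpace.span_gramSchmidt_Iio, ← Submodule.span_singleton_le_iff_mem]
  refine (Submodule.isOrtho_span.2 ?_).le
  rintro _ rfl _ ⟨j, hj, rfl⟩
  exact InnerProductSpace.gramSchmidt_orthogonal 𝕜 f hj.ne'

lemma starProjection_orthogonal_span_Iio [CompleteSpace E] (f : ι → E) (i : ι) :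
    (span 𝕜 (f '' Set.Iio i))ᗮ.starProjection (f i) = gramSchmidt 𝕜 f i := by
  have hsub : f i - gramSchmidt 𝕜 f i ∈ span 𝕜 (f '' Set.Iio i) := by
    rw [InnerProductSpace.gramSchmidt_def, sub_sub_cancel,
      ← InnerProductSpace.span_gramSchmidt_Iio]
    refine Submodule.sum_mem _ fun j hj => ?_
    rw [Submodule.starProjection_singleton]
    exact Submodule.smul_mem _ _ (Submodule.subset_span ⟨j, by simpa using hj, rfl⟩)
  exact (Submodule.eq_starProjection_of_mem_orthogonal (gramSchmidt_mem_orthogonal_span_Iio f i)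
    (Submodule.le_orthogonal_orthogonal _ hsub))

lemma exists_orthonormal_inner_eq_norm_gramSchmidt [Fintype ι] [FiniteDimensional 𝕜 E]
    (hι : Fintype.card ι ≤ finrank 𝕜 E) (f : ι → E) :
    ∃ e : ι → E, Orthonormal 𝕜 e ∧ ∀ i, inner 𝕜 (e i) (f i) = ‖gramSchmidt 𝕜 f i‖ := by
  obtain ⟨φ⟩ : Nonempty (ι ↪ Fin (finrank 𝕜 E)) :=
    Function.Embedding.nonempty_of_card_le (by rwa [Fintype.card_fin])
  obtain ⟨b, hb⟩ := exists_orthonormalBasis_extension_of_embedding (Fintype.card_fin _).symm φ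
    (v := gramSchmidtNormed 𝕜 f) (InnerProductSpace.gramSchmidtNormed_orthonormal' (𝕜 := 𝕜) f)
  obtain ⟨e, he, hextends⟩ : ∃ e : ι → E, Orthonormal 𝕜 e ∧
      ∀ j, gramSchmidtNormed 𝕜 f j ≠ 0 → e j = gramSchmidtNormed 𝕜 f j :=
    ⟨b ∘ φ, b.orthonormal.comp φ φ.injective, hb⟩
  have hgramSchmidt (j : ι) : gramSchmidt 𝕜 f j = (‖gramSchmidt 𝕜 f j‖ : 𝕜) • e j := by
    by_cases hj : gramSchmidt 𝕜 f j = 0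
    · simp [hj]
    have hj' : (‖gramSchmidt 𝕜 f j‖ : 𝕜) ≠ 0 := mod_cast norm_ne_zero_iff.2 hj
    rw [hextends j (smul_ne_zero (inv_ne_zero hj') hj), gramSchmidtNormed, smul_inv_smul₀ hj']
  refine ⟨e, he, fun i => ?_⟩
  have hbefore (j : ι) (hj : j ∈ Finset.Iio i) : inner 𝕜 (e i)
      ((inner 𝕜 (gramSchmidt 𝕜 f j) (f i) / (‖gramSchmidt 𝕜 f j‖ : 𝕜) ^ 2) • gramSchmidt 𝕜 f j) =
        0 := by
    rw [hgramSchmidt j, inner_smul_right, inner_smul_right,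
      he.inner_eq_zero (Finset.mem_Iio.1 hj).ne', mul_zero, mul_zero]
  have hself : inner 𝕜 (e i) (gramSchmidt 𝕜 f i) = (‖gramSchmidt 𝕜 f i‖ : 𝕜) := by
    nth_rw 1 [hgramSchmidt i]
    rw [inner_smul_right, inner_self_eq_norm_sq_to_K, he.norm_eq_one, RCLike.ofReal_one, one_pow,
      mul_one]
  rw [InnerProductSpace.gramSchmidt_def'' 𝕜 f i, inner_add_right, inner_sum,
    Finset.sum_eq_zero hbefore, add_zero, hself]

end

lemma measurable_gramSchmidt {E ι : Type*} [NormedAddCommGroup E] [InnerProductSpace ℝ E]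
    [MeasurableSpace E] [BorelSpace E] [SecondCountableTopology E] [LinearOrder ι]
    [LocallyFiniteOrderBot ι] [WellFoundedLT ι] (i : ι) :
    Measurable fun f : ι → E => gramSchmidt ℝ f i := by
  induction i using WellFoundedLT.induction with
  | ind i ih =>
    simp_rw +singlePass [InnerProductSpace.gramSchmidt_def, Submodule.starProjection_singleton]
    have hi : Measurable fun f : ι → E => f i := measurable_pi_apply i
    refine hi.sub (Finset.measurable_fun_sum _ fun j hj => ?_)
    have hj := ih j (Finset.mem_Iio.1 hj)
    exact ((hj.inner hi).div (hj.norm.pow_const 2)).smul hj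

end GramSchmidt

section ResampleCoordinate

variable {ι : Type*} [Fintype ι] [DecidableEq ι] {α : ι → Type*} [∀ i, MeasurableSpace (α i)]
  {μ : ∀ i, Measure (α i)} [∀ i, IsProbabilityMeasure (μ i)]

lemma measurePreserving_update (i : ι) :
    MeasurePreserving (fun p : α i × (∀ j, α j) => Function.update p.2 i p.1)
      ((μ i).prod (Measure.pi μ)) (Measure.pi μ) := by
  have hmeas : Measurable fun p : α i × (∀ j, α j) => Function.update p.2 i p.1 := by
    fun_prop
  refine ⟨hmeas, (Measure.pi_eq fun s hs => ?_).symm⟩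
  have hpreimage : (fun p : α i × (∀ j, α j) => Function.update p.2 i p.1) ⁻¹' Set.univ.pi s =
      s i ×ˢ Set.univ.pi (Function.update s i Set.univ) := by
    ext p
    simp only [Set.mem_preimage, Set.mem_pi, Set.mem_univ, true_implies, Set.mem_prod]
    refine ⟨fun h => ⟨by simpa using h i, fun j => ?_⟩, fun h j => ?_⟩ <;>
      rcases eq_or_ne j i with rfl | hj
    · simp
    · simpa [hj] using h j
    · simpa using h.1
    · simpa [hj] using h.2 j
  rw [Measure.map_apply hmeas (.univ_pi hs), hpreimage, Measure.prod_prod, Measure.pi_pi,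
    ← Finset.mul_prod_erase _ _ (Finset.mem_univ i),
    ← Finset.mul_prod_erase _ _ (Finset.mem_univ i), Function.update_self, measure_univ, one_mul]
  exact congrArg _ (Finset.prod_congr rfl fun j hj => by
    rw [Function.update_of_ne (Finset.ne_of_mem_erase hj)])

lemma le_integral_pi_of_forall_le_integral_update {f : (∀ i, α i) → ℝ}
    (hf : Integrable f (Measure.pi μ)) (i : ι) {c : ℝ}
    (hc : ∀ x, c ≤ ∫ y, f (Function.update x i y) ∂μ i) : c ≤ ∫ x, f x ∂Measure.pi μ := by
  have hmap := (measurePreserving_update (μ := μ) i).map_eq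
  have hf' : Integrable (fun p : α i × (∀ j, α j) => f (Function.update p.2 i p.1))
      ((μ i).prod (Measure.pi μ)) :=
    (measurePreserving_update i).integrable_comp_of_integrable hf
  rw [← hmap, integral_map (by fun_prop) (hmap.symm ▸ hf.aestronglyMeasurable),
    integral_prod_symm _ hf']
  calc c = ∫ _, c ∂Measure.pi μ := by simp
    _ ≤ ∫ x, ∫ y, f (Function.update x i y) ∂μ i ∂Measure.pi μ :=
      integral_mono (integrable_const c) hf'.integral_prod_right hc

end ResampleCoordinate

section OrthonormalFrames

open InnerProductSpace (gramSchmidt)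
open Module (finrank)
open Submodule (span)
open WithLp (toLp)

variable {E : Type*} [NormedAddCommGroup E] [InnerProductSpace ℝ E]

/-- The set of orthonormal families indexed by `ι` (the Stiefel manifold), in the Hilbert space of
all families. For `E = ℝᵈ` its elements are the matrices with orthonormal rows. -/
def orthonormalFrames (ι E : Type*) [Fintype ι] [NormedAddCommGroup E] [InnerProductSpace ℝ E] :
    Set (PiLp 2 fun _ : ι => E) :=
  {e | Orthonormal ℝ e}

lemma infDist_smul_orthonormalFrames_sq_le [FiniteDimensional ℝ E] {ι : Type*} [Fintype ι]
    [LinearOrder ι] [LocallyFiniteOrderBot ι] (hι : Fintype.card ι ≤ finrank ℝ E) (c : ℝ)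
    (x : PiLp 2 fun _ : ι => E) :
    Metric.infDist x (c • orthonormalFrames ι E) ^ 2 ≤
      ‖x‖ ^ 2 - 2 * c * ∑ i, ‖gramSchmidt ℝ x i‖ + c ^ 2 * Fintype.card ι := by
  obtain ⟨e, he, hinner⟩ := exists_orthonormal_inner_eq_norm_gramSchmidt hι (x : ι → E)
  have hmem : c • toLp 2 e ∈ c • orthonormalFrames ι E := Set.smul_mem_smul_set he
  have hnorm : ‖toLp 2 e‖ ^ 2 = Fintype.card ι := by
    simp [PiLp.norm_sq_eq_of_L2, he.norm_eq_one]
  have hinner_toLp : ⟪x, toLp 2 e⟫ = ∑ i, ‖gramSchmidt ℝ x i‖ := by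
    rw [real_inner_comm, PiLp.inner_apply]
    exact Finset.sum_congr rfl fun i _ => hinner i
  calc Metric.infDist x (c • orthonormalFrames ι E) ^ 2
      ≤ dist x (c • toLp 2 e) ^ 2 :=
        pow_le_pow_left₀ Metric.infDist_nonneg (Metric.infDist_le_dist_of_mem hmem) 2
    _ = ‖x‖ ^ 2 - 2 * c * ∑ i, ‖gramSchmidt ℝ x i‖ + c ^ 2 * Fintype.card ι := by
        rw [dist_eq_norm, norm_sub_sq_real, real_inner_smul_right, hinner_toLp, norm_smul, mul_pow,
          Real.norm_eq_abs, sq_abs, hnorm]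
        ring

lemma gramSchmidt_update_self [CompleteSpace E] {ι : Type*} [LinearOrder ι]
    [LocallyFiniteOrderBot ι] [WellFoundedLT ι] (x : ι → E) (i : ι) (y : E) :
    gramSchmidt ℝ (Function.update x i y) i = (span ℝ (x '' Set.Iio i))ᗮ.starProjection y := by
  have himage : Function.update x i y '' Set.Iio i = x '' Set.Iio i :=
    Set.image_congr fun j hj => Function.update_of_ne (ne_of_lt hj) _ _
  rw [← starProjection_orthogonal_span_Iio, himage, Function.update_self]

variable [FiniteDimensional ℝ E]

lemma orthonormalFrames_nonempty {ι : Type*} [Fintype ι] (hι : Fintype.card ι ≤ finrank ℝ E) :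
    (orthonormalFrames ι E).Nonempty := by
  obtain ⟨φ⟩ := Function.Embedding.nonempty_of_card_le (hι.trans_eq (Fintype.card_fin _).symm)
  exact ⟨toLp 2 (stdOrthonormalBasis ℝ E ∘ φ),
    (stdOrthonormalBasis ℝ E).orthonormal.comp φ φ.injective⟩

lemma finrank_le_finrank_orthogonal_span_image_add_card {ι : Type*} (x : ι → E) (s : Finset ι) :
    finrank ℝ E ≤ finrank ℝ (span ℝ (x '' s))ᗮ + #s := by
  classical
  rw [← (span ℝ (x '' s)).finrank_add_finrank_orthogonal, add_comm, ← Finset.coe_image]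
  gcongr
  exact (finrank_span_finset_le_card _).trans Finset.card_image_le

variable [MeasurableSpace E] [BorelSpace E]

lemma sub_half_div_sqrt_le_integral_norm_starProjection {W : Submodule ℝ E}
    (hW : 1 ≤ finrank ℝ W) : (finrank ℝ W - 1 / 2) / √(finrank ℝ E) ≤
      ∫ y, ‖W.starProjection y‖ ∂stdGaussian E := by
  have hW' : (1 : ℝ) ≤ finrank ℝ W := mod_cast hW
  have hnum : (0 : ℝ) ≤ finrank ℝ W - 1 / 2 := by linarith
  calc (finrank ℝ W - 1 / 2) / √(finrank ℝ E)
      ≤ (finrank ℝ W - 1 / 2) / √(finrank ℝ W) := by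
        gcongr
        exact W.finrank_le
    _ ≤ finrank ℝ W / √(finrank ℝ W + 1) := sub_half_div_sqrt_le_div_sqrt_add_one hW'
    _ ≤ ∫ z, ‖z‖ ∂stdGaussian W := finrank_div_sqrt_le_integral_norm_stdGaussian
    _ = ∫ y, ‖W.starProjection y‖ ∂stdGaussian E := by
        rw [← map_orthogonalProjectionOnto_stdGaussian W, integral_map (by fun_prop) (by fun_prop)]
        rfl

lemma integral_norm_sq_stdGaussian_piLp {ι : Type*} [Fintype ι] :
    ∫ x : PiLp 2 (fun _ : ι => E), ‖x‖ ^ 2 ∂stdGaussian _ = Fintype.card ι * finrank ℝ E := by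
  rw [integral_norm_sq_stdGaussian, (WithLp.linearEquiv 2 ℝ (ι → E)).finrank_eq,
    Module.finrank_pi_fintype, Finset.sum_const, Finset.card_univ, smul_eq_mul, Nat.cast_mul]

lemma measurable_gramSchmidt_ofLp {ι : Type*} [LinearOrder ι] [LocallyFiniteOrderBot ι]
    [WellFoundedLT ι] (i : ι) :
    Measurable fun x : PiLp 2 (fun _ : ι => E) => gramSchmidt ℝ x i :=
  (measurable_gramSchmidt i).comp (by fun_prop)

variable {ι : Type*} [Fintype ι] [LinearOrder ι] [LocallyFiniteOrderBot ι]

lemma integrable_norm_gramSchmidt_stdGaussian (i : ι) :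
    Integrable (fun x : PiLp 2 (fun _ : ι => E) => ‖gramSchmidt ℝ x i‖) (stdGaussian _) := by
  refine IsGaussian.integrable_id.mono
    (measurable_gramSchmidt_ofLp i).norm.aestronglyMeasurable (ae_of_all _ fun x => ?_)
  rw [norm_norm, ← starProjection_orthogonal_span_Iio]
  exact (Submodule.norm_starProjection_apply_le _ _).trans (PiLp.norm_apply_le x i)

lemma sub_card_Iio_sub_half_div_sqrt_le_integral_norm_gramSchmidt {i : ι}
    (hi : #(Iio i) < finrank ℝ E) : (finrank ℝ E - #(Iio i) - 1 / 2) / √(finrank ℝ E) ≤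
      ∫ x : PiLp 2 (fun _ : ι => E), ‖gramSchmidt ℝ x i‖ ∂stdGaussian _ := by
  have hint := integrable_norm_gramSchmidt_stdGaussian (E := E) i
  rw [← map_toLp_pi_stdGaussian] at hint ⊢
  rw [integral_map (by fun_prop) hint.aestronglyMeasurable]
  refine le_integral_pi_of_forall_le_integral_update (hint.comp_measurable (by fun_prop)) i
    fun x => ?_
  have hfinrank := finrank_le_finrank_orthogonal_span_image_add_card x (Iio i)
  rw [Finset.coe_Iio] at hfinrank
  simp only [Function.comp_apply, gramSchmidt_update_self]
  refine le_trans ?_ (sub_half_div_sqrt_le_integral_norm_starProjection (by omega))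
  gcongr
  rw [sub_le_iff_le_add]
  exact mod_cast hfinrank

lemma mul_finrank_sub_sq_div_two_le_sqrt_mul_sum_integral_norm_gramSchmidt {k : ℕ}
    (hk : k ≤ finrank ℝ E) : k * finrank ℝ E - (k : ℝ) ^ 2 / 2 ≤ √(finrank ℝ E) *
      ∑ i, ∫ x : PiLp 2 (fun _ : Fin k => E), ‖gramSchmidt ℝ x i‖ ∂stdGaussian _ := by
  have hsum (m : ℕ) : ∑ i : Fin m, ((finrank ℝ E : ℝ) - #(Iio i) - 1 / 2) =
      m * finrank ℝ E - (m : ℝ) ^ 2 / 2 := by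
    simp only [Fin.card_Iio]
    induction m with
    | zero => simp
    | succ m ih =>
      rw [Fin.sum_univ_castSucc]
      simp only [Fin.val_castSucc, ih, Fin.val_last]
      push_cast
      ring
  rw [← hsum k, Finset.mul_sum]
  refine Finset.sum_le_sum fun i _ => ?_
  have hi : #(Iio i) < finrank ℝ E := by
    rw [Fin.card_Iio]
    exact i.isLt.trans_le hk
  have hd : (0 : ℝ) < finrank ℝ E := mod_cast (Nat.zero_le _).trans_lt hi
  have hmean := sub_card_Iio_sub_half_div_sqrt_le_integral_norm_gramSchmidt hi
  rwa [div_le_iff₀' (Real.sqrt_pos.2 hd)] at hmean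

lemma memLp_two_infDist_stdGaussian {F : Type*} [NormedAddCommGroup F] [InnerProductSpace ℝ F]
    [FiniteDimensional ℝ F] [MeasurableSpace F] [BorelSpace F] (s : Set F) :
    MemLp (fun x => Metric.infDist x s) 2 (stdGaussian F) := by
  have hnorm : MemLp (fun x : F => ‖x‖) 2 (stdGaussian F) := 
    (IsGaussian.memLp_id (stdGaussian F) 2 (by simp)).norm
  have hbound : MemLp (fun x : F => Metric.infDist 0 s + ‖x‖) 2 (stdGaussian F) :=
    (memLp_const (Metric.infDist 0 s)).add hnorm
  refine hbound.mono (Metric.continuous_infDist_pt s).aestronglyMeasurable (ae_of_all _ fun x => ?_)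
  rw [Real.norm_of_nonneg Metric.infDist_nonneg,
    Real.norm_of_nonneg (add_nonneg Metric.infDist_nonneg (norm_nonneg x)), ← dist_zero_right x]
  exact Metric.infDist_le_infDist_add_dist

lemma integral_infDist_sq_smul_orthonormalFrames_le {k : ℕ} (hk : k ≤ finrank ℝ E) :
    ∫ x, Metric.infDist x (√(finrank ℝ E) • orthonormalFrames (Fin k) E) ^ 2 ∂stdGaussian _ ≤
      (k : ℝ) ^ 2 := by
  have hnorm : Integrable (fun x : PiLp 2 (fun _ : Fin k => E) => ‖x‖ ^ 2) (stdGaussian _) :=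
    (IsGaussian.memLp_id _ 2 (by simp)).integrable_norm_pow (by norm_num)
  have hgramSchmidt : Integrable (fun x : PiLp 2 (fun _ : Fin k => E) =>
      2 * √(finrank ℝ E) * ∑ i, ‖gramSchmidt ℝ x i‖) (stdGaussian _) :=
    (integrable_finsetSum _ fun i _ => integrable_norm_gramSchmidt_stdGaussian i).const_mul _
  have hdiff := hnorm.sub hgramSchmidt
  simp only [Pi.sub_def] at hdiff
  have hmean := mul_finrank_sub_sq_div_two_le_sqrt_mul_sum_integral_norm_gramSchmidt hk
  calc ∫ x, Metric.infDist x (√(finrank ℝ E) • orthonormalFrames (Fin k) E) ^ 2 ∂stdGaussian _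
      ≤ ∫ x : PiLp 2 (fun _ : Fin k => E), (‖x‖ ^ 2 -
          2 * √(finrank ℝ E) * ∑ i, ‖gramSchmidt ℝ x i‖ + √(finrank ℝ E) ^ 2 *
            Fintype.card (Fin k)) ∂stdGaussian _ := by
        refine integral_mono (memLp_two_infDist_stdGaussian _).integrable_sq
          (hdiff.add (integrable_const _)) fun x => ?_
        exact infDist_smul_orthonormalFrames_sq_le (by rwa [Fintype.card_fin]) _ x
    _ = 2 * (k * finrank ℝ E) - 2 * (√(finrank ℝ E) *
          ∑ i, ∫ x : PiLp 2 (fun _ : Fin k => E), ‖gramSchmidt ℝ x i‖ ∂stdGaussian _) := by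
        rw [integral_add hdiff (integrable_const _), integral_sub hnorm hgramSchmidt,
          integral_const_mul, integral_finsetSum _ fun i _ =>
            integrable_norm_gramSchmidt_stdGaussian i, integral_norm_sq_stdGaussian_piLp,
          integral_const, probReal_univ, one_smul, Real.sq_sqrt (Nat.cast_nonneg _),
          Fintype.card_fin]
        ring
    _ ≤ (k : ℝ) ^ 2 := by linarith

lemma integral_infDist_smul_orthonormalFrames_le {k : ℕ} (hk : k ≤ finrank ℝ E) :
    ∫ x, Metric.infDist x (√(finrank ℝ E) • orthonormalFrames (Fin k) E) ∂stdGaussian _ ≤ k := by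
  have hvar := variance_eq_sub (memLp_two_infDist_stdGaussian
    (√(finrank ℝ E) • orthonormalFrames (Fin k) E))
  have hvar_nonneg := variance_nonneg
    (fun x => Metric.infDist x (√(finrank ℝ E) • orthonormalFrames (Fin k) E)) (stdGaussian _)
  rw [hvar, sub_nonneg] at hvar_nonneg
  exact le_of_sq_le_sq (hvar_nonneg.trans (integral_infDist_sq_smul_orthonormalFrames_le hk))
    k.cast_nonneg

theorem one_sub_exp_le_measureReal_infDist_smul_orthonormalFrames_lt {k : ℕ}
    (hk : k ≤ finrank ℝ E) {u : ℝ} (hu : 0 ≤ u) : 1 - Real.exp (-u ^ 2 / 2) ≤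
      (stdGaussian (PiLp 2 fun _ : Fin k => E)).real
        {x | Metric.infDist x (√(finrank ℝ E) • orthonormalFrames (Fin k) E) < k + u} := by
  set F := fun x => Metric.infDist x (√(finrank ℝ E) • orthonormalFrames (Fin k) E)
  have : Continuous F := Metric.continuous_infDist_pt _
  have hmean : ∫ x, F x ∂stdGaussian _ ≤ k := integral_infDist_smul_orthonormalFrames_le hk
  have htail := ((infConvolutionInequality_stdGaussian _).hasSubgaussianMGF
    (Metric.lipschitz_infDist_pt (√(finrank ℝ E) • orthonormalFrames (Fin k) E))
    ((memLp_two_infDist_stdGaussian _).integrable one_le_two)).measure_ge_le hu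
  simp only [one_pow, NNReal.coe_one, mul_one] at htail
  have hcompl : {x | u ≤ F x - ∫ y, F y ∂stdGaussian _}ᶜ ⊆ {x | F x < k + u} := by
    intro x hx
    rw [Set.mem_compl_iff, Set.mem_ofPred_eq, not_le] at hx
    rw [Set.mem_ofPred_eq]
    linarith
  refine le_trans ?_ (measureReal_mono hcompl)
  rw [probReal_compl_eq_one_sub (measurableSet_le (by fun_prop) (by fun_prop))]
  exact sub_le_sub_left htail 1

end OrthonormalFrames

section RowVectors

open WithLp (toLp)

variable {ι κ : Type*}

/-- The rows of a matrix, as a family of Euclidean vectors. The Frobenius norm of the matrix is the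
norm of this family. -/
def rowVectors (M : Matrix ι κ ℝ) : PiLp 2 fun _ : ι => EuclideanSpace ℝ κ :=
  toLp 2 fun i => toLp 2 (M i)

lemma rowVectors_sub (M N : Matrix ι κ ℝ) : rowVectors (M - N) = rowVectors M - rowVectors N :=
  rfl

@[fun_prop]
lemma measurable_rowVectors : Measurable fun R : ι → κ → ℝ => rowVectors (Matrix.of R) :=
  (WithLp.measurable_toLp 2 _).comp (measurable_pi_lambda _ fun i =>
    (WithLp.measurable_toLp 2 _).comp (measurable_pi_apply i))

variable [Fintype κ]

lemma rowVectors_mul [Fintype ι] {ν : Type*} (A : Matrix ν ι ℝ) (M : Matrix ι κ ℝ) :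
    rowVectors (A * M) = rowCombination (EuclideanSpace ℝ κ) A (rowVectors M) := by
  ext l j
  simp [rowCombination_apply, rowVectors, Matrix.mul_apply]

lemma frob_eq_norm_rowVectors {a b : ℕ} (M : Matrix (Fin a) (Fin b) ℝ) :
    frob M = ‖rowVectors M‖ := by
  have hrow (i : Fin a) : ‖rowVectors M i‖ ^ 2 = ∑ j, M i j ^ 2 := by
    simp [rowVectors, EuclideanSpace.norm_sq_eq]
  rw [frob, PiLp.norm_eq_of_L2]
  simp only [hrow]

lemma frob_mul_of_transpose_mul_self_eq_one {a b c : ℕ} {A : Matrix (Fin a) (Fin b) ℝ}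
    (hA : Aᵀ * A = 1) (M : Matrix (Fin b) (Fin c) ℝ) : frob (A * M) = frob M := by
  simp only [frob_eq_norm_rowVectors, rowVectors_mul, norm_rowCombination_apply hA]

lemma rectId_mul_apply {k d n : ℕ} (hkd : k ≤ d) (M : Matrix (Fin d) (Fin n) ℝ) (i : Fin k) :
    (rectId k d * M) i = M (Fin.castLE hkd i) := by
  ext j
  rw [Matrix.mul_apply, Finset.sum_eq_single (Fin.castLE hkd i)]
  · simp [rectId]
  · intro l _ hl
    have hil : (i : ℕ) ≠ l := fun h => hl (Fin.ext h.symm)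
    simp [rectId, hil]
  · simp

lemma transpose_rectId (a b : ℕ) : (rectId a b)ᵀ = rectId b a := by
  ext i j
  simp [rectId, eq_comm]

lemma transpose_rectId_mul_rectId {n k : ℕ} (hnk : k ≤ n) :
    (rectId n k)ᵀ * rectId n k = 1 := by
  ext i j
  rw [transpose_rectId, rectId_mul_apply hnk]
  simp [rectId, Matrix.one_apply, Fin.ext_iff]

lemma exists_orthogonal_rowVectors_rectId_mul_eq {k d : ℕ} (hkd : k ≤ d)
    {e : PiLp 2 fun _ : Fin k => EuclideanSpace ℝ (Fin d)} (he : Orthonormal ℝ e) :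
    ∃ Q : Matrix (Fin d) (Fin d) ℝ, Qᵀ * Q = 1 ∧ rowVectors (rectId k d * Q) = e := by
  obtain ⟨b, hb⟩ := exists_orthonormalBasis_extension_of_embedding (s := Set.univ)
    finrank_euclideanSpace (Fin.castLEEmb hkd) (he.comp _ Subtype.val_injective)
  refine ⟨Matrix.of fun i => b i, ?_, ?_⟩
  · rw [← mul_eq_one_comm]
    ext i j
    rw [Matrix.one_apply, ← b.inner_eq_ite, PiLp.inner_apply]
    simp [Matrix.mul_apply, mul_comm]
  · ext i j
    simp [rowVectors, rectId_mul_apply hkd, ← hb i (Set.mem_univ i)]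

lemma exists_orthogonal_frob_sub_rectId_mul_lt {k d : ℕ} (hkd : k ≤ d) {c r : ℝ} (hc : 0 < c)
    {M : Matrix (Fin k) (Fin d) ℝ} (hM : Metric.infDist (c • rowVectors M)
      (c • orthonormalFrames (Fin k) (EuclideanSpace ℝ (Fin d))) < r) :
    ∃ Q : Matrix (Fin d) (Fin d) ℝ, Qᵀ * Q = 1 ∧ frob (M - rectId k d * Q) < r / c := by
  have hne : (c • orthonormalFrames (Fin k) (EuclideanSpace ℝ (Fin d))).Nonempty :=
    (orthonormalFrames_nonempty (by simpa using hkd)).smul_set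
  obtain ⟨_, ⟨e, he, rfl⟩, hdist⟩ := (Metric.infDist_lt_iff hne).1 hM
  obtain ⟨Q, hQ, rfl⟩ := exists_orthogonal_rowVectors_rectId_mul_eq hkd he
  refine ⟨Q, hQ, ?_⟩
  rwa [lt_div_iff₀' hc, frob_eq_norm_rowVectors, rowVectors_sub, ← dist_eq_norm,
    ← Real.norm_of_nonneg hc.le, ← dist_smul₀]

lemma map_sqrt_smul_rowVectors_gaussMeasure (n : ℕ) {d : ℕ} (hd : 0 < d) :
    (gaussMeasure n d).map (fun R => √d • rowVectors (Matrix.of R)) =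
      stdGaussian (PiLp 2 fun _ : Fin n => EuclideanSpace ℝ (Fin d)) := by
  have hentry : (gaussianReal 0 (d : ℝ≥0)⁻¹).map (√d * ·) = gaussianReal 0 1 := by
    rw [gaussianReal_map_const_mul, mul_zero]
    congr 1
    ext
    simp [Real.sq_sqrt, hd.ne']
  have hrow : (Measure.pi fun _ : Fin d => gaussianReal 0 (d : ℝ≥0)⁻¹).map
      (fun x => toLp 2 fun j => √d * x j) = stdGaussian (EuclideanSpace ℝ (Fin d)) := by
    rw [← map_pi_eq_stdGaussian, ← hentry, ← Measure.pi_map_pi (by fun_prop),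
      Measure.map_map (by fun_prop) (by fun_prop)]
    rfl
  have hscale : Measurable fun x : Fin d → ℝ => toLp 2 fun j => √d * x j :=
    (WithLp.measurable_toLp 2 _).comp (by fun_prop)
  have hrows : Measurable fun (R : Fin n → Fin d → ℝ) i => toLp 2 fun j => √d * R i j :=
    measurable_pi_lambda _ fun i => hscale.comp (measurable_pi_apply (X := fun _ => Fin d → ℝ) i)
  rw [gaussMeasure, ← map_toLp_pi_stdGaussian, ← hrow,
    ← Measure.pi_map_pi fun _ => hscale.aemeasurable, Measure.map_map (by fun_prop) hrows]
  rfl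

instance isProbabilityMeasure_gaussMeasure (n d : ℕ) : IsProbabilityMeasure (gaussMeasure n d) := by
  unfold gaussMeasure
  infer_instance

lemma one_sub_exp_le_gaussMeasure_infDist_lt {n k d : ℕ} (hkd : k ≤ d) (hd : 0 < d)
    {A : Matrix (Fin k) (Fin n) ℝ} (hA : A * Aᵀ = 1) {u : ℝ} (hu : 0 ≤ u) :
    1 - Real.exp (-u ^ 2 / 2) ≤ (gaussMeasure n d).real
      {R | Metric.infDist (√d • rowVectors (A * Matrix.of R))
        (√d • orthonormalFrames (Fin k) (EuclideanSpace ℝ (Fin d))) < k + u} := by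
  have hlaw : (gaussMeasure n d).map (fun R => √d • rowVectors (A * Matrix.of R)) =
      stdGaussian (PiLp 2 fun _ : Fin k => EuclideanSpace ℝ (Fin d)) := by
    rw [← map_rowCombination_stdGaussian hA, ← map_sqrt_smul_rowVectors_gaussMeasure n hd,
      Measure.map_map (by fun_prop) (by fun_prop)]
    simp only [Function.comp_def, map_smul, rowVectors_mul]
  have htail := one_sub_exp_le_measureReal_infDist_smul_orthonormalFrames_lt
    (E := EuclideanSpace ℝ (Fin d)) (k := k) (by rwa [finrank_euclideanSpace_fin]) hu
  rw [finrank_euclideanSpace_fin, ← hlaw] at htail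
  rwa [map_measureReal_apply] at htail
  · simp only [rowVectors_mul]
    fun_prop
  · exact measurableSet_lt (Metric.continuous_infDist_pt _).measurable measurable_const

theorem one_sub_exp_le_gaussMeasure_exists_frob_sub_rectId_mul_le {n k d : ℕ} (hkd : k ≤ d)
    {A : Matrix (Fin k) (Fin n) ℝ} (hA : A * Aᵀ = 1) {t : ℝ} (ht : 0 ≤ t) :
    1 - Real.exp (-t ^ 2 / 2) ≤ (gaussMeasure n d).real
      {R | ∃ Q : Matrix (Fin d) (Fin d) ℝ, Qᵀ * Q = 1 ∧
        frob (A * Matrix.of R - rectId k d * Q) ≤ √(k / d) * (√k + t)} := by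
  rcases k.eq_zero_or_pos with rfl | hk
  · have huniv : {R : Fin n → Fin d → ℝ | ∃ Q : Matrix (Fin d) (Fin d) ℝ, Qᵀ * Q = 1 ∧
        frob (A * Matrix.of R - rectId 0 d * Q) ≤ √((0 : ℕ) / d) * (√(0 : ℕ) + t)} = Set.univ :=
      Set.eq_univ_of_forall fun R => ⟨1, by simp, by simp [frob]⟩
    rw [huniv, probReal_univ]
    exact sub_le_self 1 (Real.exp_pos _).le
  have hd : 0 < d := hk.trans_le hkd
  have hbound : √(k / d) * (√k + t) = (k + √k * t) / √d := by
    rw [Real.sqrt_div k.cast_nonneg, div_mul_eq_mul_div, mul_add, Real.mul_self_sqrt k.cast_nonneg]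
  have hexp : Real.exp (-(√k * t) ^ 2 / 2) ≤ Real.exp (-t ^ 2 / 2) := by
    rw [mul_pow, Real.sq_sqrt k.cast_nonneg]
    gcongr
    exact le_mul_of_one_le_left (sq_nonneg t) (mod_cast hk)
  calc 1 - Real.exp (-t ^ 2 / 2)
      ≤ 1 - Real.exp (-(√k * t) ^ 2 / 2) := sub_le_sub_left hexp 1
    _ ≤ _ := one_sub_exp_le_gaussMeasure_infDist_lt hkd hd hA (by positivity)
    _ ≤ _ := measureReal_mono fun R hR => by
        obtain ⟨Q, hQ, hlt⟩ :=
          exists_orthogonal_frob_sub_rectId_mul_lt hkd (Real.sqrt_pos.2 (mod_cast hd)) hR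
        exact ⟨Q, hQ, hbound ▸ hlt.le⟩

end RowVectors

/-- for Gaussian `R` with i.i.d. `N(0, 1/d)` entries, with probability at least
`1 − exp(−t²/2)` there is an orthogonal `Q` with `‖Ψ − Φ I_{k×d} Q‖_F ≤ √(k/d)(√k + t)`. -/
theorem statement5 {n k d : ℕ} (hnk : k ≤ n) (hkd : k ≤ d) (t : ℝ) (ht : 0 ≤ t)
    (U : Matrix (Fin n) (Fin n) ℝ) (hU : Uᵀ * U = 1)
    (Φ : Matrix (Fin n) (Fin k) ℝ) (hΦ : Φ = U * rectId n k) :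
    ENNReal.ofReal (1 - Real.exp (-t ^ 2 / 2)) ≤
      gaussMeasure n d {R | ∃ Q : Matrix (Fin d) (Fin d) ℝ, Qᵀ * Q = 1 ∧
        frob (Φ * Φᵀ * Matrix.of R - Φ * rectId k d * Q) ≤
          Real.sqrt ((k : ℝ) / d) * (Real.sqrt k + t)} := by
  have hΦ_orthonormal : Φᵀ * Φ = 1 := by
    rw [hΦ, Matrix.transpose_mul, Matrix.mul_assoc, ← Matrix.mul_assoc Uᵀ, hU, Matrix.one_mul,
      transpose_rectId_mul_rectId hnk]
  have hfrob (R : Fin n → Fin d → ℝ) (Q : Matrix (Fin d) (Fin d) ℝ) :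
      frob (Φ * Φᵀ * Matrix.of R - Φ * rectId k d * Q) =
        frob (Φᵀ * Matrix.of R - rectId k d * Q) := by
    rw [Matrix.mul_assoc, Matrix.mul_assoc, ← Matrix.mul_sub,
      frob_mul_of_transpose_mul_self_eq_one hΦ_orthonormal]
  simp only [hfrob]
  refine ENNReal.ofReal_le_of_le_toReal ?_
  exact one_sub_exp_le_gaussMeasure_exists_frob_sub_rectId_mul_le hkd
    (by rwa [Matrix.transpose_transpose]) ht
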